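/- arXiv:1005.0715 — 2 statements merged into one kernel-verified Lean document; each statement's English description precedes it below -/
import Mathlib

section
/- The alternating group A_5 satisfies the rewriting property P_8; that is, for every sequence of 8 elements x_1, x_2, ..., x_8 of A_5 there exists a non-identity permutation σ of {1,...,8} such that x_1 x_2 ⋯ x_8 = x_{σ(1)} x_{σ(2)} ⋯ x_{σ(8)}. -/
/-- A group `G` has the rewriting property `Pₙ` if every sequence of `n` elements
can be rewritten by some non-identity permutation of its factors. -/
def RewProp (G : Type*) [Group G] (n : ℕ) : Prop :=
  ∀ x : Fin n → G, ∃ σ : Equiv.Perm (Fin n), σ ≠ 1 ∧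
    (List.ofFn x).prod = (List.ofFn (x ∘ σ)).prod

/-!
A group fails `Pₙ` exactly when it has a rigid word of length `n`: one whose letters are distinct
and have this product in no other order. If `t a` is rigid with product `z⁻¹`, then `z t` is rigid,
so every letter of a rigid word can be brought to the end without changing the length. In `A₅` it
then becomes, by conjugation in `S₅`, one fixed representative `p` of its class; the letter before
it does not commute with `p` and so can be taken, up to conjugation by the centralizer of `p`, from
a short list. A search extends these pairs to the left and discards every word in which consecutive
blocks can be permuted without changing the product; none survives to length 8. Involutions are
excluded first, so that they can be left out of the alphabet when 3-cycles are treated, and both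
kinds when 5-cycles are.

The search is evaluated by the kernel, for very many words at once: the `n`-th word occupies bit `n`
of the natural numbers that represent the letters, so that most of the work is bitwise arithmetic on
long numbers.
-/

namespace A5Rewriting

open Equiv List

/-! ### Rigid words -/

/-- A word is rigid if its letters are distinct and no other arrangement of them has the same
product. Rigid words are the counterexamples to rewritability. -/
def Rigid {M : Type*} [Monoid M] (w : List M) : Prop :=
  w.Nodup ∧ ∀ w', w' ~ w → w'.prod = w.prod → w' = w

namespace Rigid

section Monoid

variable {M N : Type*} [Monoid M] [Monoid N]

theorem of_infix {v w : List M} (hw : Rigid w) (h : v <:+: w) : Rigid v := by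
  obtain ⟨s, t, rfl⟩ := h
  refine ⟨hw.1.sublist (infix_append s v t).sublist, fun v' hv' hprod => ?_⟩
  have := hw.2 (s ++ v' ++ t) ((hv'.append_left s).append_right t) (by simp [hprod])
  simpa using this

theorem map {F : Type*} [FunLike F M N] [MonoidHomClass F M N] {w : List M} (hw : Rigid w) {f : F}
    (hf : Function.Injective f) : Rigid (w.map f) := by
  refine ⟨hw.1.map hf, fun w' hw' hprod => ?_⟩
  obtain ⟨v, rfl, hv⟩ : Relation.Comp (· = List.map f ·) (· ~ ·) w' w := by
    rwa [eq_map_comp_perm]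
  rw [hw.2 v hv (hf (by simpa only [map_list_prod] using hprod))]

theorem not_commute {a b : M} {v w : List M} (hw : Rigid (v ++ a :: b :: w)) : ¬Commute a b := by
  intro hab
  have h := hw.of_infix (v := [a, b]) ⟨v, w, by simp⟩
  have hba : [b, a] = [a, b] := h.2 [b, a] (.swap a b []) (by simp [hab.eq])
  have hne : a ≠ b := by simpa using h.1
  exact hne (head_eq_of_cons_eq hba).symm

theorem prod_map_ne_of_mem_tail {b c : List M} {bs cs : List (List M)}
    (hw : Rigid (b :: bs).flatten) (hne : [] ∉ b :: bs) (hc : c ∈ bs) (hperm : c :: cs ~ b :: bs) :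
    ((c :: cs).map prod).prod ≠ ((b :: bs).map prod).prod := by
  intro hprod
  have heq := hw.2 _ hperm.flatten (by simpa only [prod_flatten] using hprod)
  have hbc : b.Disjoint c := (pairwise_cons.1 (nodup_flatten.1 hw.1).2).1 c hc
  obtain ⟨x, b, rfl⟩ := exists_cons_of_ne_nil fun h => hne (h ▸ mem_cons_self)
  obtain ⟨y, c, rfl⟩ := exists_cons_of_ne_nil fun h => hne (h ▸ mem_cons_of_mem _ hc)
  have hxy : y = x := head_eq_of_cons_eq heq
  exact hbc mem_cons_self (hxy ▸ mem_cons_self)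

end Monoid

section Group

variable {G : Type*} [Group G]

theorem nodup_rotate {a : G} {t : List G} (h : Rigid (t ++ [a])) :
    ((t ++ [a]).prod⁻¹ :: t).Nodup := by
  refine nodup_cons.2 ⟨fun hz => ?_, h.1.of_append_left⟩
  obtain ⟨u, v, huv⟩ := append_of_mem hz
  generalize hz_def : (t ++ [a]).prod⁻¹ = z at huv
  obtain rfl := huv
  rw [append_assoc, cons_append] at h hz_def
  have hsquare : (z * u.prod) * (z * (v ++ [a]).prod) = 1 := by
    rw [mul_assoc, ← prod_cons, ← prod_append, inv_eq_iff_eq_inv.1 hz_def, mul_inv_cancel]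
  have heq : u ++ z :: (v ++ [a]) = v ++ [a] ++ z :: u := by
    refine (h.2 _ (perm_middle.trans <| (perm_append_comm.cons z).trans perm_middle.symm) ?_).symm
    rw [prod_append, prod_cons, inv_eq_iff_eq_inv.1 hz_def]
    exact eq_inv_of_mul_eq_one_right
      (by simpa only [mul_assoc] using mul_eq_one_comm.1 hsquare)
  have hnot : z ∉ u ∧ z ∉ v ++ [a] := by
    simpa only [mem_append, not_or] using (perm_middle.nodup_iff.1 h.1).notMem
  obtain ⟨rfl, -⟩ := (append_cons_inj_of_notMem hnot.1 hnot.2).1 heq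
  exact (nodup_append.1 h.1).2.2 a (by simp) a (by simp) rfl

/-- Slides a window of length `w.length` one step back along the periodic sequence with period
`(t ++ [a]).prod⁻¹ :: t ++ [a]`. -/
theorem rotate {a : G} {t : List G} (h : Rigid (t ++ [a])) : Rigid ((t ++ [a]).prod⁻¹ :: t) := by
  refine ⟨h.nodup_rotate, fun w hw hprod => ?_⟩
  obtain ⟨p, q, rfl⟩ := append_of_mem (hw.mem_iff.2 mem_cons_self)
  have hpq : p ++ q ~ t := (perm_middle.symm.trans hw).cons_inv
  have heq : q ++ a :: p = t ++ [a] := by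
    refine h.2 _ (perm_middle.trans ?_) ?_
    · exact ((perm_append_comm.trans hpq).cons a).trans (perm_append_singleton a t).symm
    · generalize hz : (t ++ [a]).prod⁻¹ = z at hprod
      have hpzqa : p.prod * (z * (q.prod * a)) = 1 := calc
        _ = (p ++ z :: q).prod * a := by simp only [prod_append, prod_cons, mul_assoc]
        _ = 1 := by rw [hprod, ← hz]; simp [mul_assoc]
      rw [inv_eq_iff_eq_inv.1 hz, prod_append, prod_cons, ← mul_assoc]
      exact eq_inv_of_mul_eq_one_right
        (by simpa only [mul_assoc] using mul_eq_one_comm.1 hpzqa)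
  have ha : a ∉ p ∧ a ∉ q := by
    have := ((perm_append_singleton a t).nodup_iff.1 h.1).notMem
    simpa only [← hpq.mem_iff, mem_append, not_or] using this
  obtain ⟨rfl, -, rfl⟩ := (append_cons_inj_of_notMem ha.2 ha.1).1 heq
  rfl

theorem exists_concat {g : G} {p q : List G} (h : Rigid (p ++ g :: q)) :
    ∃ v, v.length = p.length + q.length ∧ Rigid (v ++ [g]) := by
  induction q using List.reverseRecOn generalizing p with
  | nil => exact ⟨p, rfl, h⟩
  | append_singleton q a ih =>
    rw [← cons_append, ← append_assoc] at h
    obtain ⟨v, hv, hrigid⟩ := ih (p := _ :: p) h.rotate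
    exact ⟨v, by rw [hv]; simp; omega, hrigid⟩

end Group
end Rigid

section RewProp

variable {n : ℕ}

theorem exists_perm_of_perm_ofFn {α : Type*} {x : Fin n → α} {w : List α} (h : w ~ ofFn x) :
    ∃ σ : Perm (Fin n), w = ofFn (x ∘ σ) := by
  rw [ofFn_eq_map] at h
  obtain ⟨l, rfl, hl⟩ : Relation.Comp (· = List.map x ·) (· ~ ·) w (finRange n) := by
    rwa [eq_map_comp_perm]
  have hlen : l.length = n := by rw [hl.length_eq, length_finRange]
  have hinj : Function.Injective fun i : Fin n => l[i] := fun _ _ hij =>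
    Fin.ext ((hl.nodup_iff.2 (nodup_finRange n)).getElem_inj_iff.1 hij)
  refine ⟨.ofBijective _ (Finite.injective_iff_bijective.1 hinj), ?_⟩
  exact ext_getElem (by simp [hlen]) (by simp)

theorem exists_rigid_of_not_rewProp {G : Type*} [Group G] (h : ¬RewProp G n) :
    ∃ w : List G, w.length = n ∧ Rigid w := by
  simp only [RewProp, not_forall, not_exists, not_and] at h
  obtain ⟨x, hx⟩ := h
  have hfixed (σ : Perm (Fin n)) (hσ : (ofFn x).prod = (ofFn (x ∘ σ)).prod) : σ = 1 :=
    by_contra fun hne => hx σ hne hσ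
  refine ⟨ofFn x, length_ofFn, nodup_ofFn.2 fun i j hij => ?_, fun w' hw' hprod => ?_⟩
  · refine swap_eq_one_iff.1 (hfixed (swap i j) ?_)
    rw [comp_swap_eq_update, hij, Function.update_eq_self, ← hij, Function.update_eq_self]
  · obtain ⟨σ, rfl⟩ := exists_perm_of_perm_ofFn hw'
    rw [hfixed σ hprod.symm, Perm.coe_one, Function.comp_id]

end RewProp

/-! ### Permutations in parallel lanes -/

/-- A point of `Fin 5` in each of many lanes at once: bit `n` of `p j` says that the point in
lane `n` is `j`. -/
abbrev LanePoint := Fin 5 → ℕ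

namespace LanePoint

/-- Lane `n` of `p` holds the point `i`. -/
def Encodes (n : ℕ) (p : LanePoint) (i : Fin 5) : Prop :=
  ∀ j, (p j).testBit n = decide (i = j)

/-- The lanes in which two points coincide. -/
def agree (p q : LanePoint) : ℕ :=
  -- The kernel evaluates `Nat.land` directly, but has to unfold the instances behind `&&&`.
  let meet i := Nat.land (p i) (q i)
  Nat.lor (Nat.lor (Nat.lor (Nat.lor (meet 0) (meet 1)) (meet 2)) (meet 3)) (meet 4)

theorem testBit_agree {n : ℕ} {p q : LanePoint} {i j : Fin 5} (hp : p.Encodes n i)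
    (hq : q.Encodes n j) : (agree p q).testBit n = decide (i = j) := by
  change ((p 0 &&& q 0) ||| (p 1 &&& q 1) ||| (p 2 &&& q 2) ||| (p 3 &&& q 3) |||
    (p 4 &&& q 4)).testBit n = _
  simp only [Nat.testBit_or, Nat.testBit_and, hp _, hq _]
  clear hp hq
  revert i j
  decide

end LanePoint

/-- A permutation of `Fin 5` in each of many lanes at once, given by the images of the points. -/
abbrev LanePerm := Fin 5 → LanePoint

namespace LanePerm

/-- Lane `n` of `M` holds the even permutation `g`. -/
def Encodes (n : ℕ) (M : LanePerm) (g : Perm (Fin 5)) : Prop :=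
  Perm.sign g = 1 ∧ ∀ i, (M i).Encodes n (g i)

/-- The lanewise inverse, which is a transposition because `M i j` marks the lanes where `i ↦ j`. -/
def inv (M : LanePerm) : LanePerm := fun i j => M j i

/-- The lanewise composition `i ↦ M (N i)`. -/
def mul (M N : LanePerm) : LanePerm := fun i j => (M.inv j).agree (N i)

/-- The lanewise inverse of the product of `M :: L`. -/
def prodInv (M : LanePerm) (L : List LanePerm) : LanePerm :=
  L.foldl (fun P N => N.inv.mul P) M.inv

/-- The lanewise product of a nonempty list. -/
def prod : List LanePerm → LanePerm
  | [] => fun _ _ => 0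
  | M :: L => (prodInv M L).inv

/-- The lanes in which two even permutations coincide, which is decided by three points. -/
def eqMask (M N : LanePerm) : ℕ :=
  (M 0).agree (N 0) &&& (M 1).agree (N 1) &&& (M 2).agree (N 2)

theorem eq_of_sign_eq_one {g h : Perm (Fin 5)} (hg : Perm.sign g = 1) (hh : Perm.sign h = 1)
    (h0 : g 0 = h 0) (h1 : g 1 = h 1) (h2 : g 2 = h 2) : g = h := by
  have key : ∀ k : Perm (Fin 5), Perm.sign k = 1 → k 0 = 0 → k 1 = 1 → k 2 = 2 → k = 1 := by
    decide +kernel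
  refine (inv_mul_eq_one.1 (key (h⁻¹ * g) ?_ ?_ ?_ ?_)).symm <;> simp [*]

variable {n : ℕ} {M N : LanePerm} {g h : Perm (Fin 5)} {L : List LanePerm}
  {w : List (Perm (Fin 5))}

theorem Encodes.inv (hM : M.Encodes n g) : M.inv.Encodes n g⁻¹ :=
  ⟨by simpa using hM.1, fun i j => (hM.2 j i).trans <| by
    rw [decide_eq_decide, Perm.inv_eq_iff_eq, eq_comm]⟩

theorem Encodes.mul (hM : M.Encodes n g) (hN : N.Encodes n h) : (M.mul N).Encodes n (g * h) :=
  ⟨by simp [hM.1, hN.1], fun i j => (LanePoint.testBit_agree (hM.inv.2 j) (hN.2 i)).trans <| by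
    rw [decide_eq_decide, Perm.inv_eq_iff_eq, Perm.mul_apply, eq_comm]⟩

theorem Encodes.prodInv (hM : M.Encodes n g) (hL : Forall₂ (Encodes n) L w) :
    (M.prodInv L).Encodes n (g :: w).prod⁻¹ := by
  have hfold : w.foldl (fun k h => h⁻¹ * k) g⁻¹ = (g :: w).prod⁻¹ := by
    rw [prod_eq_foldl, foldl_cons, one_mul]
    exact foldl_hom (g₁ := fun a b => a * b) (·⁻¹) (by simp)
  rw [← hfold]
  exact rel_foldl (P := Encodes n) (fun _ _ hP _ _ hN => hN.inv.mul hP) hM.inv hL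

theorem encodes_prod (hL : Forall₂ (Encodes n) L w) (hne : L ≠ []) :
    (prod L).Encodes n w.prod := by
  cases hL with
  | nil => contradiction
  | cons hM hL =>
    have h := (hM.prodInv hL).inv
    rw [inv_inv] at h
    exact h

theorem testBit_eqMask (hM : M.Encodes n g) (hN : N.Encodes n h) :
    (M.eqMask N).testBit n = decide (g = h) := by
  simp only [eqMask, Nat.testBit_and, LanePoint.testBit_agree (hM.2 _) (hN.2 _),
    ← Bool.decide_and, decide_eq_decide]
  exact ⟨fun h => eq_of_sign_eq_one hM.1 hN.1 h.1.1 h.1.2 h.2, by rintro rfl; simp⟩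

end LanePerm

/-- The union, over all ways to extract an entry `a` from `p.reverse ++ s` at a position in `s`, of
`f a` applied to the remaining list. -/
def orPicks {α : Type*} (f : α → List α → ℕ) : List α → List α → ℕ
  | _, [] => 0
  | p, a :: s => f a (p.reverseAux s) ||| orPicks f (a :: p) s

theorem exists_pick_of_testBit_orPicks {α : Type*} {f : α → List α → ℕ} {n : ℕ} {p s : List α}
    (h : (orPicks f p s).testBit n) :
    ∃ a r, a :: r ~ s ∧ (f a (p.reverse ++ r)).testBit n := by
  induction s generalizing p with
  | nil => simp [orPicks] at h
  | cons c s ih =>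
    rw [orPicks, Nat.testBit_or, Bool.or_eq_true, reverseAux_eq] at h
    obtain h | h := h
    · exact ⟨c, s, .refl _, h⟩
    · obtain ⟨a, r, hperm, hbit⟩ := ih h
      exact ⟨a, c :: r, (Perm.swap c a r).trans (hperm.cons c), by simpa using hbit⟩

/-- The lanes in which the entries of a list can be arranged so that their product `x` satisfies
`P = x * Q`. Each `true` in the first argument strips a leftmost factor off `P`, each `false`
multiplies a rightmost factor into `Q`. -/
def search : List Bool → LanePerm → LanePerm → List LanePerm → ℕ
  | [], P, Q, _ => P.eqMask Q
  | true :: ds, P, Q, l => orPicks (fun M l => search ds (M.inv.mul P) Q l) [] l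
  | false :: ds, P, Q, l => orPicks (fun M l => search ds P (M.mul Q) l) [] l

/-- The directions in which `search` takes `n` factors. Working from both ends keeps the number of
partial products down, and the kernel computes each partial product only once. -/
def directions (n : ℕ) : List Bool := replicate (n / 2) true ++ replicate (n - n / 2) false

/-- The lanes in which some arrangement that starts with a different entry has the same product. -/
def rearrangeMask : List LanePerm → ℕ
  | [] => 0
  | M :: L => orPicks (fun N l => search (directions l.length) N.inv (M.prodInv L) l) [M] L

section Rearrangement

variable {β : Type*} {f : β → Perm (Fin 5)} {n : ℕ} {b : β} {bs : List β}

theorem exists_forall₂_of_cons_perm {α : Type*} {R : α → β → Prop} {a : α} {r s : List α}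
    (hperm : a :: r ~ s) (hs : Forall₂ R s bs) :
    ∃ c cs, R a c ∧ Forall₂ R r cs ∧ c :: cs ~ bs := by
  obtain ⟨_, hcs, hperm⟩ := perm_comp_forall₂ hperm hs
  cases hcs with
  | cons hac hcs => exact ⟨_, _, hac, hcs, hperm⟩

theorem exists_perm_of_testBit_search {ds : List Bool} {P Q : LanePerm} {l : List LanePerm}
    {g h : Perm (Fin 5)} (hP : P.Encodes n g) (hQ : Q.Encodes n h)
    (hl : Forall₂ (fun M c => M.Encodes n (f c)) l bs) (hds : ds.length = l.length)
    (hbit : (search ds P Q l).testBit n) :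
    ∃ cs, cs ~ bs ∧ g = (cs.map f).prod * h := by
  induction ds generalizing P Q l g h bs with
  | nil =>
    obtain rfl : l = [] := length_eq_zero_iff.1 hds.symm
    cases hl
    exact ⟨[], .refl _, by simpa [LanePerm.testBit_eqMask hP hQ, search] using hbit⟩
  | cons d ds ih =>
    cases d <;> obtain ⟨M, r, hpick, hbit⟩ := exists_pick_of_testBit_orPicks hbit <;>
      obtain ⟨c, cs, hM, hr, hperm⟩ := exists_forall₂_of_cons_perm hpick hl <;>
      have hlen : ds.length = r.length := by simpa [← hpick.length_eq] using hds
    · obtain ⟨cs', hperm', heq⟩ := ih hP (hM.mul hQ) hr hlen hbit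
      refine ⟨cs' ++ [c], ?_, by simp [heq, mul_assoc]⟩
      exact (perm_append_singleton c cs').trans ((hperm'.cons c).trans hperm)
    · obtain ⟨cs', hperm', heq⟩ := ih (hM.inv.mul hP) hQ hr hlen hbit
      exact ⟨c :: cs', (hperm'.cons c).trans hperm,
        by rw [map_cons, prod_cons, mul_assoc, ← heq, mul_inv_cancel_left]⟩

theorem exists_perm_of_testBit_rearrangeMask {L : List LanePerm}
    (hL : Forall₂ (fun M c => M.Encodes n (f c)) L (b :: bs))
    (hbit : (rearrangeMask L).testBit n) :
    ∃ c ∈ bs, ∃ cs, c :: cs ~ b :: bs ∧ ((c :: cs).map f).prod = ((b :: bs).map f).prod := by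
  rcases hL with _ | ⟨hM, hL⟩
  obtain ⟨N, r, hpick, hbit⟩ := exists_pick_of_testBit_orPicks hbit
  obtain ⟨c, cs, hN, hr, hperm⟩ := exists_forall₂_of_cons_perm hpick hL
  obtain ⟨cs', hperm', heq⟩ := exists_perm_of_testBit_search hN.inv
    (hM.prodInv (forall₂_map_right_iff.2 hL)) (.cons hM hr) (by simp [directions]; omega) hbit
  refine ⟨c, hperm.subset mem_cons_self, cs', ?_, ?_⟩
  · exact (hperm'.cons c).trans ((Perm.swap b c cs).trans (hperm.cons b))
  · rw [map_cons, prod_cons, map_cons, ← eq_inv_mul_iff_mul_eq, heq, inv_mul_cancel_right]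

end Rearrangement

/-! ### Rearrangement tests -/

/-- Consecutive blocks of the given lengths at the front of a list. The last block may be shorter,
and the first length `0` ends the cutting. -/
def cutBlocks {α : Type*} : List ℕ → List α → List (List α)
  | (n + 1) :: ns, a :: l => (a :: l.take n) :: cutBlocks ns (l.drop n)
  | _, _ => []

section cutBlocks

variable {α β : Type*}

theorem flatten_cutBlocks_prefix (ns : List ℕ) (l : List α) : (cutBlocks ns l).flatten <+: l := by
  fun_induction cutBlocks ns l with
  | case1 n ns a l ih =>
    rw [flatten_cons, cons_append, cons_prefix_cons]
    exact ⟨rfl, by simpa [take_append_drop] using (prefix_append_right_inj (l.take n)).2 ih⟩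
  | case2 => exact nil_prefix

theorem nil_notMem_cutBlocks (ns : List ℕ) (l : List α) : [] ∉ cutBlocks ns l := by
  fun_induction cutBlocks ns l with
  | case1 n ns a l ih => simpa using ih
  | case2 => exact not_mem_nil

theorem forall₂_cutBlocks {R : α → β → Prop} (ns : List ℕ) {l : List α} {w : List β}
    (h : Forall₂ R l w) : Forall₂ (Forall₂ R) (cutBlocks ns l) (cutBlocks ns w) := by
  induction ns generalizing l w with
  | nil => exact .nil
  | cons n ns ih =>
    cases n with
    | zero => exact .nil
    | succ n =>
      cases h with
      | nil => exact .nil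
      | cons hab h => exact .cons (.cons hab (forall₂_take n h)) (ih (forall₂_drop n h))

end cutBlocks

/-- A sound criterion for words not to be rigid: in the lanes of `bad`, a rearrangement has been
found. -/
structure Test where
  bad : List LanePerm → ℕ
  sound : ∀ {n L w}, Forall₂ (LanePerm.Encodes n) L w → (bad L).testBit n → ¬Rigid w

theorem encodes_prod_cutBlocks {n : ℕ} {L : List LanePerm} {w : List (Perm (Fin 5))}
    (hL : Forall₂ (LanePerm.Encodes n) L w) (ns : List ℕ) :
    Forall₂ (fun M v => LanePerm.Encodes n M v.prod) ((cutBlocks ns L).map LanePerm.prod)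
      (cutBlocks ns w) := by
  have hne : ∀ L' ∈ cutBlocks ns L, L' ≠ [] := fun L' hL' =>
    ne_of_mem_of_not_mem hL' (nil_notMem_cutBlocks ns L)
  exact forall₂_map_left_iff.2 <| ((forall₂_and_left _ _).2 ⟨hne, forall₂_cutBlocks ns hL⟩).imp
    fun _ _ h => LanePerm.encodes_prod h.2 h.1

/-- Cuts blocks of the given lengths off the word and permutes these blocks. -/
def blockTest (ns : List ℕ) : Test where
  bad L := rearrangeMask ((cutBlocks ns L).map .prod)
  sound {n L w} hL hbit hw := by
    have hblocks := encodes_prod_cutBlocks hL ns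
    have hrigid := hw.of_infix (flatten_cutBlocks_prefix ns w).isInfix
    have hne := nil_notMem_cutBlocks ns w
    cases hcut : cutBlocks ns w with
    | nil =>
      rw [hcut, forall₂_nil_right_iff] at hblocks
      simp [hblocks, rearrangeMask] at hbit
    | cons b bs =>
      rw [hcut] at hblocks hrigid hne
      obtain ⟨c, hc, cs, hperm, hprod⟩ := exists_perm_of_testBit_rearrangeMask hblocks hbit
      exact hrigid.prod_map_ne_of_mem_tail hne hc hperm hprod

theorem map_getD_range_length {α : Type*} (l : List α) (a : α) :
    (range l.length).map (l.getD · a) = l :=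
  ext_getElem (by simp) (by simp +contextual)

theorem Rigid.prod_map_getD_ne {M : Type*} [Monoid M] {a : M} {w : List M} {i : ℕ} {is : List ℕ}
    (hw : Rigid (a :: w)) (hi : i ≠ 0) (hperm : i :: is ~ range (a :: w).length) :
    ((i :: is).map ((a :: w).getD · a)).prod ≠ (a :: w).prod := by
  intro hprod
  have hmap := hperm.map ((a :: w).getD · a)
  rw [map_getD_range_length] at hmap
  have heq := hw.2 _ hmap hprod
  have hlt : i < (a :: w).length := mem_range.1 (hperm.subset mem_cons_self)
  have hhead : (a :: w)[i] = (a :: w)[0] :=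
    (getD_eq_getElem _ _ hlt).symm.trans (head_eq_of_cons_eq heq)
  exact hi (hw.1.getElem_inj_iff.1 hhead)

theorem forall₂_getD {α β : Type*} {R : α → β → Prop} {a : α} {b : β} {l : List α} {w : List β}
    (h : Forall₂ R l w) (hab : R a b) (k : ℕ) : R (l.getD k a) (w.getD k b) := by
  induction h generalizing k with
  | nil => exact hab
  | cons hcd _ ih => cases k with
    | zero => exact hcd
    | succ k => exact ih k

/-- The lanes in which a word keeps its product when it is rearranged by the positions `i :: is`. -/
def orderMask (i : ℕ) (is : List ℕ) : List LanePerm → ℕ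
  | [] => 0
  | M :: L => bif L.length == is.length then
      (M.prodInv L).eqMask (((M :: L).getD i M).prodInv (is.map ((M :: L).getD · M))) else 0

theorem prod_eq_of_testBit_orderMask {n i : ℕ} {is : List ℕ} {L : List LanePerm}
    {g : Perm (Fin 5)} {w : List (Perm (Fin 5))} (hL : Forall₂ (LanePerm.Encodes n) L (g :: w))
    (hbit : (orderMask i is L).testBit n) :
    w.length = is.length ∧ ((i :: is).map ((g :: w).getD · g)).prod = (g :: w).prod := by
  rcases hL with _ | ⟨hM, hL⟩
  have hget := forall₂_getD (.cons hM hL) hM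
  rw [orderMask, Bool.cond_eq_ite] at hbit
  split at hbit
  case isFalse => simp at hbit
  case isTrue hlen =>
    refine ⟨hL.length_eq ▸ beq_iff_eq.1 hlen, ?_⟩
    have hrest := (hget i).prodInv (forall₂_map_left_iff.2 <| forall₂_map_right_iff.2 <|
      forall₂_same.2 fun k (_ : k ∈ is) => hget k)
    rw [LanePerm.testBit_eqMask (hM.prodInv hL) hrest, decide_eq_true_eq, inv_inj] at hbit
    exact hbit.symm

/-- Compares a word with its rearrangement by the single permutation `i :: is` of the positions,
which moves the first one. -/
def orderTest (i : ℕ) (is : List ℕ) (hi : i ≠ 0) (hperm : i :: is ~ range (is.length + 1)) :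
    Test where
  bad := orderMask i is
  sound {n L w} hL hbit hw := by
    cases w with
    | nil =>
      rw [forall₂_nil_right_iff.1 hL] at hbit
      simp [orderMask] at hbit
    | cons g w =>
      obtain ⟨hlen, hprod⟩ := prod_eq_of_testBit_orderMask hL hbit
      exact hw.prod_map_getD_ne hi (by rwa [length_cons, hlen]) hprod

/-! ### Words in parallel lanes -/

/-- A list of words of even permutations, stored lane by lane: lane `n < width` is occupied if bit
`n` of `alive` is set, and then the `k`-th letter of its word is in lane `n` of `letters[k]`. -/
structure Lanes where
  width : ℕ
  alive : ℕ
  letters : List LanePerm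

namespace Lanes

/-- The word `w` is in an occupied lane. -/
def Holds (S : Lanes) (w : List (Perm (Fin 5))) : Prop :=
  ∃ n < S.width, S.alive.testBit n ∧ Forall₂ (LanePerm.Encodes n) S.letters w

/-- The empty word, in a single lane. -/
def start : Lanes := ⟨1, 1, []⟩

theorem holds_start : start.Holds [] := ⟨0, by simp [start], by simp [start], .nil⟩

/-- Transforms all masks of some letters, hence permutes or copies their lanes. -/
def mapMasks (f : ℕ → ℕ) (L : List LanePerm) : List LanePerm := L.map fun M i j => f (M i j)

theorem forall₂_mapMasks {f : ℕ → ℕ} {m n : ℕ} {L : List LanePerm} {w : List (Perm (Fin 5))}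
    (hf : ∀ v, (f v).testBit m = v.testBit n) (h : Forall₂ (LanePerm.Encodes n) L w) :
    Forall₂ (LanePerm.Encodes m) (mapMasks f L) w :=
  forall₂_map_left_iff.2 <| h.imp fun _ _ hM => ⟨hM.1, fun i j => (hf _).trans (hM.2 i j)⟩

variable {S T : Lanes} {w : List (Perm (Fin 5))}

section Extend

/-- The lowest `N` bits of `v`, repeated `k` times. -/
def tile (N k v : ℕ) : ℕ := v % 2 ^ N * ((2 ^ (N * k) - 1) / (2 ^ N - 1))

theorem tile_succ {N : ℕ} (hN : 0 < N) (k v : ℕ) :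
    tile N (k + 1) v = 2 ^ N * tile N k v + v % 2 ^ N := by
  have hbase : 2 ≤ 2 ^ N := Nat.le_self_pow hN.ne' 2
  rw [tile, tile, pow_mul, pow_mul, ← Nat.geomSum_eq hbase, ← Nat.geomSum_eq hbase,
    Finset.sum_range_succ', pow_zero, mul_add, mul_one, Finset.mul_sum, Finset.mul_sum,
    Finset.mul_sum]
  simp only [pow_succ]
  congr 1
  exact Finset.sum_congr rfl fun _ _ => by ring

theorem testBit_tile {N k m : ℕ} (hm : m < N * k) (v : ℕ) :
    (tile N k v).testBit m = v.testBit (m % N) := by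
  have hN : 0 < N := Nat.pos_of_mul_pos_right (Nat.zero_lt_of_lt hm)
  induction k generalizing m with
  | zero => simp at hm
  | succ k ih =>
    rw [tile_succ hN, Nat.testBit_two_pow_mul_add _ (Nat.mod_lt _ (by positivity))]
    split
    case isTrue h => rw [Nat.testBit_mod_two_pow, Nat.mod_eq_of_lt h]; simp [h]
    case isFalse h =>
      rw [ih (by rw [mul_add] at hm; omega), ← Nat.mod_eq_sub_mod (not_lt.1 h)]

/-- The `t`-th entry of `A` in lane `t`. -/
def lanesOf (A : List (Perm (Fin 5))) : LanePerm :=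
  fun i j => Nat.ofBits fun t : Fin A.length => decide (A[t] i = j)

theorem encodes_lanesOf {A : List (Perm (Fin 5))} {t : ℕ} (ht : t < A.length)
    (hsign : Perm.sign A[t] = 1) : (lanesOf A).Encodes t A[t] :=
  ⟨hsign, fun _ _ => Nat.testBit_ofBits_lt _ t ht⟩

theorem exists_lt_mod_eq {N k n t : ℕ} (hcop : N.Coprime k) (hn : n < N) (ht : t < k) :
    ∃ m < N * k, m % N = n ∧ m % k = t :=
  have hmod := (Nat.chineseRemainder hcop n t).2
  ⟨_, Nat.chineseRemainder_lt_mul hcop n t (Nat.ne_zero_of_lt hn) (Nat.ne_zero_of_lt ht),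
    Nat.mod_eq_of_modEq hmod.1 hn, Nat.mod_eq_of_modEq hmod.2 ht⟩

/-- Prepends a letter to the words: lane `m` combines lane `m % N` of the words with lane `m % k` of
the new letter, so all combinations occur if `N` and `k` are coprime. A layout by quotient and
remainder would give many masks the same hash value, which slows down the kernel. -/
def extendWith (A : LanePerm) (k N : ℕ) (S : Lanes) : Lanes where
  width := N * k
  alive := tile N k S.alive
  letters := (fun i j => tile k N (A i j)) :: mapMasks (tile N k) S.letters

theorem Holds.extendWith {A : LanePerm} {k N t : ℕ} {g : Perm (Fin 5)} (h : S.Holds w)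
    (hA : A.Encodes t g) (ht : t < k) (hN : S.width ≤ N) (hcop : N.Coprime k) :
    (extendWith A k N S).Holds (g :: w) := by
  obtain ⟨n, hn, halive, hw⟩ := h
  obtain ⟨m, hm, hmN, hmk⟩ := exists_lt_mod_eq hcop (hn.trans_le hN) ht
  have hold (v : ℕ) : (tile N k v).testBit m = v.testBit n := by rw [testBit_tile hm, hmN]
  have hnew (v : ℕ) : (tile k N v).testBit m = v.testBit t := by
    rw [testBit_tile (by rwa [mul_comm]), hmk]
  exact ⟨m, hm, (hold _).trans halive,
    .cons ⟨hA.1, fun i j => (hnew _).trans (hA.2 i j)⟩ (forall₂_mapMasks hold hw)⟩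

/-- Prepends every letter of `A` to every word. -/
def extend (A : List (Perm (Fin 5))) (S : Lanes) : Lanes :=
  extendWith (lanesOf A) A.length (A.length * (S.width / A.length + 1) + 1) S

theorem Holds.extend {A : List (Perm (Fin 5))} {g : Perm (Fin 5)} (h : S.Holds w) (hg : g ∈ A)
    (hsign : Perm.sign g = 1) : (extend A S).Holds (g :: w) := by
  obtain ⟨t, ht, rfl⟩ := getElem_of_mem hg
  refine h.extendWith (encodes_lanesOf ht hsign) ht ?_ (by simp)
  exact (Nat.lt_mul_div_succ _ (Nat.zero_lt_of_lt ht)).le.trans (Nat.le_succ _)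

theorem length_extend (A : List (Perm (Fin 5))) (S : Lanes) :
    (extend A S).letters.length = S.letters.length + 1 := by
  simp [extend, Lanes.extendWith, mapMasks]

end Extend

/-- Frees the lanes whose words fail a test. -/
def sieve (t : Test) (S : Lanes) : Lanes :=
  { S with alive := S.alive ^^^ (S.alive &&& t.bad S.letters) }

theorem Holds.sieve (h : S.Holds w) (hw : Rigid w) (t : Test) : (S.sieve t).Holds w := by
  obtain ⟨n, hn, halive, hL⟩ := h
  refine ⟨n, hn, ?_, hL⟩
  have := mt (t.sound hL) (not_not_intro hw)
  simp [Lanes.sieve, halive, this]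

section Compress

/-- Moves the lanes in `landed <<< j` down by `j` and drops the lanes that are in neither mask. The
condition holds for the arguments that `compress` uses; it spares us from proving so. -/
def slide (j moved kept landed : ℕ) (S : Lanes) : Lanes :=
  bif (kept &&& landed == 0) && (landed <<< j == moved) then
    ⟨S.width, kept ||| landed, mapMasks (fun c => c &&& kept ||| c >>> j &&& landed) S.letters⟩
  else S

theorem Holds.slide {j moved kept landed : ℕ} (h : S.Holds w)
    (hcover : ∀ n, S.alive.testBit n → kept.testBit n ∨ moved.testBit n) :
    (slide j moved kept landed S).Holds w := by
  cases hguard : (kept &&& landed == 0) && (landed <<< j == moved)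
  case false => rwa [Lanes.slide, hguard]
  rw [Lanes.slide, hguard, cond_true]
  obtain ⟨hdisj, rfl⟩ : kept &&& landed = 0 ∧ landed <<< j = moved := by simpa using hguard
  have hdisj (m : ℕ) : ¬(kept.testBit m ∧ landed.testBit m) := by
    rw [← Bool.and_eq_true, ← Nat.testBit_and, hdisj, Nat.zero_testBit]
    exact Bool.false_ne_true
  obtain ⟨n, hn, halive, hL⟩ := h
  obtain hkept | hmoved := hcover n halive
  · have hlanded : landed.testBit n = false := by
      simpa only [hkept, true_and, Bool.not_eq_true] using hdisj n
    refine ⟨n, hn, by simp [hkept], ?_⟩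
    exact forall₂_mapMasks (f := fun c => c &&& kept ||| c >>> j &&& landed) (m := n)
      (fun c => by simp [hkept, hlanded]) hL
  · rw [Nat.testBit_shiftLeft, Bool.and_eq_true, decide_eq_true_eq] at hmoved
    have hkept : kept.testBit (n - j) = false := by
      simpa only [hmoved.2, and_true, Bool.not_eq_true] using hdisj (n - j)
    refine ⟨n - j, (Nat.sub_le n j).trans_lt hn, by simp [hmoved.2], ?_⟩
    exact forall₂_mapMasks (f := fun c => c &&& kept ||| c >>> j &&& landed) (m := n - j)
      (fun c => by simp [hmoved.2, hkept, Nat.add_sub_of_le hmoved.1]) hL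

theorem length_slide (j moved kept landed : ℕ) (S : Lanes) :
    (slide j moved kept landed S).letters.length = S.letters.length := by
  simp only [slide, Bool.cond_eq_ite, apply_ite letters, apply_ite length, mapMasks, length_map,
    ite_self]

/-- Bit `k` of the result is the parity of the bits `0, …, k` of `x`, if `j = 1` and `n`
is large enough. -/
def prefixXor (full : ℕ) : ℕ → ℕ → ℕ → ℕ
  | 0, _, x => x
  | n + 1, j, x => prefixXor full n (j + j) (full &&& (x ^^^ x <<< j))

/-- The last `n` stages of the compression in Warren, *Hacker’s Delight*, Section 7-4. The next one
moves words by `j` lanes, and `m` marks the free lanes that have not been accounted for. -/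
def compressStages (s full : ℕ) : ℕ → ℕ → ℕ → Lanes → Lanes
  | 0, _, _, S => S
  | n + 1, j, m, S =>
    let p := prefixXor full s 1 m
    let moved := p &&& S.alive
    compressStages s full n (j + j) (m &&& (full ^^^ p))
      (slide j moved (S.alive ^^^ moved) (moved >>> j) S)

theorem Holds.compressStages (h : S.Holds w) (s full n j m : ℕ) :
    (compressStages s full n j m S).Holds w := by
  induction n generalizing j m S with
  | zero => exact h
  | succ _ ih => exact ih (h.slide fun k hk => by simp [hk]) _ _

theorem length_compressStages (s full n j m : ℕ) (S : Lanes) :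
    (compressStages s full n j m S).letters.length = S.letters.length := by
  induction n generalizing j m S with
  | zero => rfl
  | succ n ih => exact (ih _ _ _).trans (length_slide _ _ _ _ _)

/-- The number of binary digits of `v < 2 ^ (a + 2 ^ n)`, if it is more than `a`. The kernel has no
fast evaluation of `Nat.log2`. -/
def bitLength (v : ℕ) : ℕ → ℕ → ℕ
  | 0, a => a + 1
  | n + 1, a => bitLength v n (bif Nat.ble (2 ^ (a + 2 ^ n)) v then a + 2 ^ n else a)

/-- Forgets the lanes from `W` on, unless one of them is occupied. -/
def crop (W : ℕ) (S : Lanes) : Lanes :=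
  bif Nat.ble (2 ^ W) S.alive then S else { S with width := W }

theorem Holds.crop (h : S.Holds w) (W : ℕ) : (S.crop W).Holds w := by
  unfold Lanes.crop
  cases hle : Nat.ble (2 ^ W) S.alive
  case true => exact h
  obtain ⟨n, -, halive, hL⟩ := h
  refine ⟨n, ?_, halive, hL⟩
  have hlt : S.alive < 2 ^ W := by
    rwa [← not_le, ← Nat.ble_eq, Bool.not_eq_true]
  exact (Nat.pow_lt_pow_iff_right one_lt_two).1 ((Nat.ge_two_pow_of_testBit halive).trans_lt hlt)

theorem length_crop (W : ℕ) (S : Lanes) : (S.crop W).letters.length = S.letters.length := by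
  simp only [crop, Bool.cond_eq_ite, apply_ite letters, ite_self]

/-- Moves the occupied lanes together, by the parallel-suffix method. -/
def compress (S : Lanes) : Lanes :=
  let W := bitLength S.alive 24 0
  let s := bitLength W 5 0
  let full := 2 ^ W - 1
  let S := compressStages s full s 1 (full &&& (full ^^^ S.alive) <<< 1) S
  S.crop (bitLength S.alive 24 0)

theorem Holds.compress (h : S.Holds w) : S.compress.Holds w :=
  (h.compressStages _ _ _ _ _).crop _

theorem length_compress (S : Lanes) : S.compress.letters.length = S.letters.length :=
  (length_crop _ _).trans (length_compressStages _ _ _ _ _ _)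

end Compress

theorem not_holds_of_alive_eq_zero (h : S.alive == 0) : ¬S.Holds w := by
  rintro ⟨n, -, halive, -⟩
  simp [beq_iff_eq.1 h] at halive

/-- Applies tests one after another, as long as words remain. -/
def sieves : List Test → Lanes → Lanes
  | [], S => S
  | t :: ts, S => bif S.alive == 0 then S else sieves ts (compress (S.sieve t))

theorem Holds.sieves (h : S.Holds w) (hw : Rigid w) (ts : List Test) : (sieves ts S).Holds w := by
  induction ts generalizing S with
  | nil => exact h
  | cons t ts ih =>
    rw [Lanes.sieves]
    cases S.alive == 0
    case true => exact h
    case false => exact ih (h.sieve hw t).compress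

theorem length_sieves (ts : List Test) (S : Lanes) :
    (sieves ts S).letters.length = S.letters.length := by
  induction ts generalizing S with
  | nil => rfl
  | cons t ts ih =>
    rw [sieves]
    cases S.alive == 0
    case true => rfl
    case false => exact (ih _).trans (length_compress _)

section Grow

/-- The words of `S` and those of `T`, with the lanes of `T` above those of `S`. -/
def merge (S T : Lanes) : Lanes where
  width := S.width + T.width
  alive := S.alive % 2 ^ S.width ||| T.alive <<< S.width
  letters := zipWith (fun M N i j => M i j % 2 ^ S.width ||| N i j <<< S.width) S.letters T.letters

theorem length_merge {k : ℕ} (hS : S.letters.length = k) (hT : T.letters.length = k) :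
    (merge S T).letters.length = k := by
  simp [merge, hS, hT]

theorem Holds.merge_left (h : S.Holds w) (hlen : T.letters.length = S.letters.length) :
    (merge S T).Holds w := by
  obtain ⟨n, hn, halive, hL⟩ := h
  refine ⟨n, Nat.lt_add_right _ hn, by simp [merge, hn, halive], ?_⟩
  obtain ⟨hlenw, hL⟩ := forall₂_iff_get.1 hL
  refine forall₂_iff_get.2 ⟨(length_merge rfl hlen).trans hlenw, fun k hS hk => ?_⟩
  rw [length_merge rfl hlen] at hS
  refine ⟨(hL k hS hk).1, fun i j => ?_⟩
  rw [← (hL k hS hk).2 i j]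
  simp [merge, hn]

theorem Holds.merge_right (h : T.Holds w) (hlen : S.letters.length = T.letters.length) :
    (merge S T).Holds w := by
  obtain ⟨n, hn, halive, hL⟩ := h
  refine ⟨S.width + n, Nat.add_lt_add_left hn _, by simp [merge, halive], ?_⟩
  obtain ⟨hlenw, hL⟩ := forall₂_iff_get.1 hL
  refine forall₂_iff_get.2 ⟨(length_merge hlen rfl).trans hlenw, fun k hT hk => ?_⟩
  rw [length_merge hlen rfl] at hT
  refine ⟨(hL k hT hk).1, fun i j => ?_⟩
  rw [← (hL k hT hk).2 i j]
  simp [merge]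

/-- The words of all entries of a list. -/
def mergeAll : List Lanes → Lanes
  | [] => ⟨0, 0, []⟩
  | [S] => S
  | S :: T :: Ts => merge S (mergeAll (T :: Ts))

theorem length_mergeAll {k : ℕ} {Ts : List Lanes} (hlen : ∀ T ∈ Ts, T.letters.length = k)
    (hne : Ts ≠ []) : (mergeAll Ts).letters.length = k := by
  fun_induction mergeAll Ts with
  | case1 => contradiction
  | case2 S => simpa using hlen
  | case3 S T Ts ih =>
    exact length_merge (hlen S mem_cons_self) (ih (forall_mem_of_forall_mem_cons hlen) (by simp))

theorem Holds.mergeAll {k : ℕ} {Ts : List Lanes} (h : T.Holds w) (hT : T ∈ Ts)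
    (hlen : ∀ T ∈ Ts, T.letters.length = k) : (mergeAll Ts).Holds w := by
  fun_induction Lanes.mergeAll Ts with
  | case1 => simp at hT
  | case2 S => rwa [← mem_singleton.1 hT]
  | case3 S U Ts ih =>
    have hlen' := forall_mem_of_forall_mem_cons hlen
    have hrest := length_mergeAll hlen' (by simp)
    obtain rfl | hT := mem_cons.1 hT
    · exact h.merge_left (hrest.trans (hlen T mem_cons_self).symm)
    · exact (ih hT hlen').merge_right ((hlen S mem_cons_self).trans hrest.symm)

/-- Extends the words to the left by those letters of `A` that map `0` to `i`. -/
def growBatch (A : List (Perm (Fin 5))) (ts : List Test) (S : Lanes) (i : Fin 5) : Lanes :=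
  sieves ts (extend (A.filter fun g => g 0 = i) S)

/-- Extends the words to the left by the letters of `A`. Treating these in batches, according to the
image of `0`, keeps the masks short. -/
def grow (A : List (Perm (Fin 5))) (ts : List Test) (S : Lanes) : Lanes :=
  mergeAll ((finRange 5).map (growBatch A ts S))

theorem length_growBatch (A : List (Perm (Fin 5))) (ts : List Test) (S : Lanes) (i : Fin 5) :
    (growBatch A ts S i).letters.length = S.letters.length + 1 :=
  (length_sieves _ _).trans (length_extend _ _)

theorem Holds.grow {A : List (Perm (Fin 5))} {g : Perm (Fin 5)} (h : S.Holds w) (hg : g ∈ A)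
    (hsign : Perm.sign g = 1) (hw : Rigid (g :: w)) (ts : List Test) :
    (grow A ts S).Holds (g :: w) := by
  have hbatch : (growBatch A ts S (g 0)).Holds (g :: w) :=
    (h.extend (mem_filter.2 ⟨hg, by simp⟩) hsign).sieves hw ts
  exact hbatch.mergeAll (mem_map_of_mem (mem_finRange _))
    (forall_mem_map.2 fun i _ => length_growBatch A ts S i)

end Grow

end Lanes

/-- One round of the search: how the words are extended to the left, and the tests that they must
pass, first batch by batch and then all together. -/
structure Step where
  alphabet : List (Perm (Fin 5))
  tests : List Test
  late : List Test

/-- Whether no word survives the given rounds. -/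
def run : List Step → Lanes → Bool
  | [], S => S.alive == 0
  | s :: script, S =>
    bif S.alive == 0 then true else run script (.sieves s.late (S.grow s.alphabet s.tests))

theorem not_rigid_of_run {steps : List Step} {S : Lanes} {u w : List (Perm (Fin 5))}
    (hrun : run steps S = true) (hS : S.Holds w)
    (hu : Forall₂ (fun g s => g ∈ s.alphabet ∧ Perm.sign g = 1) u steps) :
    ¬Rigid (u.reverse ++ w) := by
  induction hu generalizing S w with
  | nil => exact absurd hS (Lanes.not_holds_of_alive_eq_zero hrun)
  | @cons g s u steps hg _ ih =>
    intro hw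
    rw [reverse_cons, append_assoc, singleton_append] at hw
    have hgw : Rigid (g :: w) := hw.of_infix (suffix_append _ _).isInfix
    rw [run] at hrun
    cases halive : S.alive == 0
    case true => exact Lanes.not_holds_of_alive_eq_zero halive hS
    case false =>
      rw [halive] at hrun
      exact ih hrun ((hS.grow hg.1 hg.2 hgw s.tests).sieves hgw s.late) hw

/-! ### Exclusion of the conjugacy classes -/

/-- The search for rigid words of length 8 that end in `y, p` with `y ∈ ys` and have all their other
letters in `A`. The tests were selected by experiment: the cheap ones come first, and the long list
in the last step disposes of the few words that remain. -/
def script (p : Perm (Fin 5)) (ys A : List (Perm (Fin 5))) : List Step :=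
  [⟨[p], [], []⟩,
   ⟨ys, [], []⟩,
   ⟨A, [], [blockTest [1, 1, 1]]⟩,
   ⟨A, [], [blockTest [1, 1, 1, 1]]⟩,
   ⟨A, [], [blockTest [1, 1, 1, 1, 1]]⟩,
   ⟨A, [blockTest [1, 1, 1, 1, 1], blockTest [1, 1, 1, 1, 2]], [blockTest [1, 1, 1, 1, 1, 1]]⟩,
   ⟨A, [blockTest [1, 1, 1, 1, 1]],
    [blockTest [1, 1, 1, 1, 1, 1], blockTest [1, 2, 1, 1, 1, 1]]⟩,
   ⟨A, [blockTest [1, 1, 1, 1, 1]],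
    [blockTest [1, 1, 1, 1, 1, 1], blockTest [1, 1, 1, 1, 3, 1], blockTest [3, 1, 1, 1, 1, 1],
     blockTest [1, 1, 2, 1, 1, 2], blockTest [1, 1, 1, 1, 1, 3], blockTest [1, 1, 1, 3, 1],
     blockTest [2, 1, 1, 1, 1, 1],
     orderTest 4 [6, 5, 3, 7, 1, 0, 2] (by decide) (by decide),
     orderTest 1 [6, 3, 5, 4, 7, 2, 0] (by decide) (by decide)]⟩]

theorem not_rigid_of_run_script {p y : alternatingGroup (Fin 5)} {ys A : List (Perm (Fin 5))}
    {v : List (alternatingGroup (Fin 5))} (hrun : run (script p ys A) .start = true)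
    (hy : ↑y ∈ ys) (hv : v.length = 6) (hA : ∀ g ∈ v, ↑g ∈ A) : ¬Rigid (v ++ [y, p]) := by
  intro hw
  obtain ⟨a, b, c, d, e, f, rfl⟩ : ∃ a b c d e f, v = [a, b, c, d, e, f] := by
    match v, hv with
    | [a, b, c, d, e, f], _ => exact ⟨a, b, c, d, e, f, rfl⟩
  have hsteps : Forall₂ (fun g s => g ∈ s.alphabet ∧ Perm.sign g = 1)
      ([p, y, f, e, d, c, b, a].map Subtype.val) (script p ys A) := by
    have hsign (g : alternatingGroup (Fin 5)) : Perm.sign g.val = 1 :=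
      Perm.mem_alternatingGroup.1 g.2
    simp only [forall_mem_cons] at hA
    simp [script, hy, hA, hsign]
  exact not_rigid_of_run hrun Lanes.holds_start hsteps
    (hw.map (f := (alternatingGroup (Fin 5)).subtype) Subtype.val_injective)

/-- The element `g` occurs in no rigid word of length 8. -/
def Excluded (g : alternatingGroup (Fin 5)) : Prop :=
  ∀ w : List (alternatingGroup (Fin 5)), w.length = 8 → Rigid w → g ∉ w

theorem Excluded.of_conj {g : alternatingGroup (Fin 5)} {τ : Perm (Fin 5)}
    (h : Excluded (MulAut.conjNormal τ g)) : Excluded g := fun w hlen hw hg =>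
  h (w.map (MulAut.conjNormal τ)) (by rwa [length_map])
    (hw.map (MulEquiv.injective _)) (mem_map_of_mem hg)

/-- The even permutations with property `P`, as an alphabet for the search. -/
def evens (P : Perm (Fin 5) → Prop) [DecidablePred P] : List (Perm (Fin 5)) :=
  (permsOfList (finRange 5)).filter fun g => Perm.sign g = 1 ∧ P g

theorem coe_mem_evens {P : Perm (Fin 5) → Prop} [DecidablePred P] {g : alternatingGroup (Fin 5)}
    (hg : P g) : ↑g ∈ evens P :=
  mem_filter.2 ⟨mem_permsOfList_iff.2 fun _ => mem_finRange _,
    decide_eq_true ⟨Perm.mem_alternatingGroup.1 g.2, hg⟩⟩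

theorem excluded_of_runs {P : Perm (Fin 5) → Prop} [DecidablePred P]
    {p : alternatingGroup (Fin 5)} {yss : List (List (Perm (Fin 5)))}
    (hP : ∀ g : alternatingGroup (Fin 5), ¬P g → Excluded g)
    (hyss : ∀ h : alternatingGroup (Fin 5), P h → h * p ≠ p * h →
      ∃ τ : Perm (Fin 5), MulAut.conjNormal τ p = p ∧ ∃ ys ∈ yss, ↑(MulAut.conjNormal τ h) ∈ ys)
    (hruns : ∀ ys ∈ yss, run (script p ys (evens P)) .start = true) : Excluded p := by
  have hletters {w : List (alternatingGroup (Fin 5))} (hlen : w.length = 8) (hw : Rigid w) :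
      ∀ g ∈ w, P g := fun g hg => by_contra fun hPg => hP g hPg w hlen hw hg
  intro w hlen hw hp
  obtain ⟨s, t, rfl⟩ := append_of_mem hp
  obtain ⟨u, hu, hrigid⟩ := hw.exists_concat
  have hu : u.length = 7 := by rw [length_append, length_cons] at hlen; omega
  obtain ⟨v, y, rfl⟩ := (eq_nil_or_concat' u).resolve_left (by rintro rfl; simp at hu)
  have hv : v.length = 6 := by simpa using hu
  rw [append_assoc, singleton_append] at hrigid
  have hy : P y := hletters (by simp [hv]) hrigid y (by simp)
  obtain ⟨τ, hτ, ys, hys, hmem⟩ := hyss y hy hrigid.not_commute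
  have hconj := hrigid.map (MulAut.conjNormal τ).injective
  rw [map_append, map_cons, map_singleton, hτ] at hconj
  exact not_rigid_of_run_script (hruns ys hys) hmem (by rwa [length_map])
    (fun g hg => coe_mem_evens <| hletters (by simp [hv]) hconj g (mem_append_left _ hg)) hconj

/-- The representative of the involutions of `A₅` up to conjugation in `S₅`. -/
def involution : alternatingGroup (Fin 5) :=
  ⟨c[1, 2] * c[3, 4], Perm.mem_alternatingGroup.2 (by decide)⟩

/-- Even permutations that do not commute with `involution`, up to conjugation by its centralizer in
`S₅`; each batch is small enough for one run of the search. -/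
def involutionBatches : List (List (Perm (Fin 5))) :=
  [[c[2, 3, 4]], [c[0, 1] * c[3, 4]], [c[0, 1] * c[2, 3]], [c[0, 1, 2]], [c[0, 1, 2, 3, 4]],
    [c[0, 1, 3, 4, 2]], [c[0, 1, 3]], [c[0, 1, 3, 2, 4]]]

/-- The representative of the 3-cycles up to conjugation. -/
def threeCycle : alternatingGroup (Fin 5) :=
  ⟨c[2, 3, 4], Perm.mem_alternatingGroup.2 (by decide)⟩

/-- Even permutations of order 3 or 5 that do not commute with `threeCycle`, up to conjugation by
its centralizer in `S₅`. -/
def threeCycleBatches : List (List (Perm (Fin 5))) :=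
  [[c[1, 2, 3], c[1, 2, 4], c[0, 1, 2]], [c[0, 1, 2, 3, 4], c[0, 1, 2, 4, 3]],
    [c[0, 2, 1, 3, 4], c[0, 2, 4, 1, 3]]]

/-- The representative of the 5-cycles up to conjugation in `S₅`. -/
def fiveCycle : alternatingGroup (Fin 5) :=
  ⟨c[0, 1, 2, 3, 4], Perm.mem_alternatingGroup.2 (by decide)⟩

/-- Permutations of order 5 that do not commute with `fiveCycle`, up to conjugation by its
centralizer in `S₅`. -/
def fiveCycleBatch : List (Perm (Fin 5)) :=
  [c[0, 1, 2, 4, 3], c[0, 1, 3, 4, 2], c[0, 1, 4, 3, 2], c[0, 2, 4, 3, 1]]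

set_option maxHeartbeats 2000000 in
-- The runs are long, and they share one theorem because separate theorems may be checked
-- concurrently, while each run needs several gigabytes of memory.
theorem run_scripts :
    (∀ ys ∈ involutionBatches, run (script involution ys (evens fun _ => True)) .start = true) ∧
    (∀ ys ∈ threeCycleBatches, run (script threeCycle ys (evens (· ^ 2 ≠ 1))) .start = true) ∧
    run (script fiveCycle fiveCycleBatch (evens fun g => g ^ 2 ≠ 1 ∧ g ^ 3 ≠ 1)) .start = true := by
  refine ⟨?_, ?_, by decide +kernel⟩
  · rw [involutionBatches]
    iterate 8 refine forall_mem_cons.2 ⟨by decide +kernel, ?_⟩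
    exact forall_mem_nil _
  · rw [threeCycleBatches]
    iterate 3 refine forall_mem_cons.2 ⟨by decide +kernel, ?_⟩
    exact forall_mem_nil _

theorem exists_conj_eq_involution :
    ∀ g : alternatingGroup (Fin 5), g ^ 2 = 1 → g ≠ 1 →
      ∃ τ : Perm (Fin 5), MulAut.conjNormal τ g = involution := by
  decide +kernel

theorem exists_conj_mem_involutionBatches :
    ∀ h : alternatingGroup (Fin 5), h * involution ≠ involution * h →
      ∃ τ : Perm (Fin 5), MulAut.conjNormal τ involution = involution ∧
        ∃ ys ∈ involutionBatches, ↑(MulAut.conjNormal τ h) ∈ ys := by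
  decide +kernel

theorem excluded_one : Excluded 1 :=
  excluded_of_runs (P := fun _ => True) (yss := []) (by simp) (by simp) (by simp)

theorem excluded_of_sq_eq_one {g : alternatingGroup (Fin 5)} (hg : g ^ 2 = 1) : Excluded g := by
  obtain rfl | hne := eq_or_ne g 1
  · exact excluded_one
  obtain ⟨τ, hτ⟩ := exists_conj_eq_involution g hg hne
  have hinvolution : Excluded involution := excluded_of_runs (P := fun _ => True) (by simp)
    (fun h _ => exists_conj_mem_involutionBatches h) run_scripts.1
  exact .of_conj (hτ ▸ hinvolution)

theorem exists_conj_eq_threeCycle :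
    ∀ g : alternatingGroup (Fin 5), g ^ 3 = 1 → g ≠ 1 →
      ∃ τ : Perm (Fin 5), MulAut.conjNormal τ g = threeCycle := by
  decide +kernel

theorem exists_conj_mem_threeCycleBatches :
    ∀ h : alternatingGroup (Fin 5), h.val ^ 2 ≠ 1 → h * threeCycle ≠ threeCycle * h →
      ∃ τ : Perm (Fin 5), MulAut.conjNormal τ threeCycle = threeCycle ∧
        ∃ ys ∈ threeCycleBatches, ↑(MulAut.conjNormal τ h) ∈ ys := by
  decide +kernel

theorem excluded_of_pow_three_eq_one {g : alternatingGroup (Fin 5)} (hg : g ^ 3 = 1) :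
    Excluded g := by
  obtain rfl | hne := eq_or_ne g 1
  · exact excluded_one
  obtain ⟨τ, hτ⟩ := exists_conj_eq_threeCycle g hg hne
  have hthreeCycle : Excluded threeCycle := excluded_of_runs (P := (· ^ 2 ≠ 1))
    (fun h hh => excluded_of_sq_eq_one (Subtype.ext (not_not.1 hh)))
    exists_conj_mem_threeCycleBatches run_scripts.2.1
  exact .of_conj (hτ ▸ hthreeCycle)

theorem exists_conj_eq_fiveCycle :
    ∀ g : alternatingGroup (Fin 5), g ^ 2 ≠ 1 → g ^ 3 ≠ 1 →
      ∃ τ : Perm (Fin 5), MulAut.conjNormal τ g = fiveCycle := by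
  decide +kernel

theorem exists_conj_mem_fiveCycleBatch :
    ∀ h : alternatingGroup (Fin 5), h.val ^ 2 ≠ 1 ∧ h.val ^ 3 ≠ 1 →
      h * fiveCycle ≠ fiveCycle * h →
      ∃ τ : Perm (Fin 5), MulAut.conjNormal τ fiveCycle = fiveCycle ∧
        ∃ ys ∈ [fiveCycleBatch], ↑(MulAut.conjNormal τ h) ∈ ys := by
  decide +kernel

theorem excluded_fiveCycle : Excluded fiveCycle := by
  refine excluded_of_runs (fun g hg => ?_) exists_conj_mem_fiveCycleBatch
    (forall_mem_singleton.2 run_scripts.2.2)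
  rw [not_and_or, not_not, not_not] at hg
  obtain hg | hg := hg
  · exact excluded_of_sq_eq_one (Subtype.ext hg)
  · exact excluded_of_pow_three_eq_one (Subtype.ext hg)

theorem excluded (g : alternatingGroup (Fin 5)) : Excluded g := by
  by_cases h2 : g ^ 2 = 1
  · exact excluded_of_sq_eq_one h2
  by_cases h3 : g ^ 3 = 1
  · exact excluded_of_pow_three_eq_one h3
  obtain ⟨τ, hτ⟩ := exists_conj_eq_fiveCycle g h2 h3
  exact .of_conj (hτ ▸ excluded_fiveCycle)

end A5Rewriting

/-- The alternating group `A₅` satisfies the rewriting property `P₈`. -/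
theorem A5_rewritable_eight : RewProp (alternatingGroup (Fin 5)) 8 := by
  by_contra hfail
  obtain ⟨w, hlen, hw⟩ := A5Rewriting.exists_rigid_of_not_rewProp hfail
  obtain ⟨g, hg⟩ := List.exists_mem_of_length_pos (by rw [hlen]; decide : 0 < w.length)
  exact A5Rewriting.excluded g w hlen hw hg
end

section
/- The alternating group A_5 satisfies the rewriting property P_n for every integer n ≥ 8; that is, for every n ≥ 8 and every sequence of n elements x_1, ..., x_n of A_5 there exists a non-identity permutation σ of {1,...,n} such that x_1 x_2 ⋯ x_n = x_{σ(1)} x_{σ(2)} ⋯ x_{σ(n)}. -/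
/-!
Call a word rigid if its letters are distinct and no other arrangement of them has the same product.
If `x₁ ⋯ xₙ` is rigid, then so are its infixes, the words which arise by multiplying neighbours, and
the word `x₂ ⋯ xₙ (x₁ ⋯ xₙ)⁻¹`. In terms of the chain of partial products, this says that rigidity
passes to subchains. By the last operation, every pair of neighbours in a rigid word can be moved to
its front, where it can be excluded by a search for rigid words with these first two letters.
Up to conjugation in `S₅` and the reversal `a, b ↦ b⁻¹, a⁻¹`, there are 19 pairs of elements of `A₅`
which do not commute. They are excluded one after the other, and pairs that are already excluded
prune the later searches. A word of eight letters with a given front is a chain `1, p, q, …` with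
six further terms. The rigidity of its short subchains amounts to conditions on single terms, on
pairs and on triples of terms, and these leave so few chains that each remaining word can be
rewritten.
-/

namespace Rewriting

open List

section RigidWords

variable {M : Type*} [Monoid M]

/-- A word is rigid if its letters are distinct and no other arrangement of them has the same
product. Distinctness is demanded because exchanging equal letters is a non-identity permutation
of the positions which does not change the word. -/
def Rigid (x : List M) : Prop :=
  x.Nodup ∧ ∀ y, y ~ x → y.prod = x.prod → y = x

lemma Rigid.of_infix {x y : List M} (hy : Rigid y) (h : x <:+: y) : Rigid x := by
  obtain ⟨A, B, rfl⟩ := h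
  refine ⟨hy.1.sublist (infix_append A x B).sublist, fun z hz hprod ↦ ?_⟩
  have heq : A ++ z ++ B = A ++ x ++ B :=
    hy.2 _ ((hz.append_left A).append_right B) (by simp only [prod_append, hprod])
  exact append_cancel_left (append_cancel_right heq)

lemma Rigid.of_map {N : Type*} [Monoid N] (f : M →* N) {x : List M} (hx : Rigid (x.map f))
    (hf : Function.Injective f) : Rigid x :=
  ⟨hx.1.of_map f, fun _ hy hprod ↦ map_injective_iff.2 hf
    (hx.2 _ (hy.map f) (by rw [← map_list_prod, hprod, map_list_prod]))⟩

lemma Rigid.prod_cons_ne {x y : List M} {a b : M} (hx : Rigid (a :: x)) (hb : b ∈ x)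
    (hy : b :: y ~ a :: x) : (b :: y).prod ≠ (a :: x).prod := fun hprod ↦
  (nodup_cons.1 hx.1).1 ((cons.inj (hx.2 _ hy hprod)).1 ▸ hb)

lemma Rigid.prod_mul_mul_ne {x A B : List M} {z : M} (hx : Rigid (x ++ [z])) (hAB : A ++ B ~ x)
    (hB : B ≠ []) : A.prod * z * B.prod ≠ x.prod * z := fun hprod ↦ by
  have heq : A ++ z :: B = x ++ [z] := by
    refine hx.2 _ (perm_middle.trans ((hAB.cons z).trans (perm_append_singleton z x).symm)) ?_
    simpa [mul_assoc] using hprod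
  have hlast : B.getLast hB = z := by
    simpa [getLast?_cons, getLast?_eq_getLast_of_ne_nil hB] using congrArg getLast? heq
  have hz : z ∈ x := hAB.subset (mem_append_right A (hlast ▸ getLast_mem hB))
  exact disjoint_of_nodup_append hx.1 hz (mem_singleton_self z)

lemma Rigid.mul_adjacent {A C : List M} {a b : M} (h : Rigid (A ++ a :: b :: C)) :
    Rigid (A ++ (a * b) :: C) := by
  classical
  obtain ⟨haA, haC⟩ : a ∉ A ∧ a ∉ b :: C := by
    have := h.1
    grind
  have hAC : (A ++ C).Nodup := h.1.sublist (((sublist_cons_self b C).cons a).append_left A)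
  refine ⟨nodup_middle.2 (nodup_cons.2 ⟨fun hmem ↦ ?_, hAC⟩), fun y hy hprod ↦ ?_⟩
  · rcases mem_append.1 hmem with hA | hC
    · obtain ⟨A, B, rfl⟩ := append_of_mem hA
      have heq : A ++ a :: b :: B ++ (a * b) :: C = A ++ (a * b) :: B ++ a :: b :: C :=
        h.2 _ (by grind) (by simp [mul_assoc])
      simp only [append_assoc, cons_append, append_cancel_left_eq, cons.injEq] at heq
      exact haA (heq.1 ▸ hA)
    · obtain ⟨B, C, rfl⟩ := append_of_mem hC
      have heq : A ++ (a * b) :: B ++ a :: b :: C = A ++ a :: b :: (B ++ (a * b) :: C) :=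
        h.2 _ (by grind) (by simp [mul_assoc])
      simp only [append_assoc, cons_append, append_cancel_left_eq, cons.injEq] at heq
      exact haC (by grind)
  · obtain ⟨A', C', rfl⟩ := append_of_mem (hy.symm.subset (mem_append_right A mem_cons_self))
    have heq : A' ++ a :: b :: C' = A ++ a :: b :: C := by
      refine h.2 _ ?_ (by simpa [mul_assoc] using hprod)
      refine perm_iff_count.2 fun c ↦ ?_
      have := hy.count_eq c
      simp only [count_append, count_cons] at this ⊢
      omega
    obtain ⟨rfl, -, hC⟩ := (append_cons_inj_of_notMem haA haC).1 heq.symm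
    rw [(cons.inj hC).2]

lemma not_rigid_pair_of_commute {a b : M} (h : Commute a b) : ¬ Rigid [a, b] := fun hr ↦
  hr.prod_cons_ne (mem_singleton_self b) (Perm.swap a b []) (by simpa using h.eq.symm)

end RigidWords

section RigidWordsInGroups

variable {G : Type*} [Group G]

lemma Rigid.rotate {a : G} {x : List G} (h : Rigid (a :: x)) :
    Rigid (x ++ [((a :: x).prod)⁻¹]) := by
  obtain ⟨c, hc⟩ : ∃ c, c⁻¹ = (a :: x).prod := ⟨_, inv_inv _⟩
  rw [← hc, inv_inv]
  have eq_nil {A B : List G} (hAB : A ++ B ~ x) (hprod : B.prod * (a * A.prod) = c⁻¹) :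
      B = [] := by
    rcases B with _ | ⟨b, B⟩
    · rfl
    · have hperm : b :: (B ++ a :: A) ~ a :: x :=
        perm_middle.trans ((perm_append_comm.trans hAB).cons a)
      refine (h.prod_cons_ne (hAB.subset (by simp)) hperm ?_).elim
      simpa [hc, mul_assoc] using hprod
  refine ⟨(perm_append_singleton c x).nodup_iff.2 (nodup_cons.2 ⟨fun hs ↦ ?_, h.1.of_cons⟩),
    fun y hy hprod ↦ ?_⟩
  · obtain ⟨A, B, hAB⟩ := append_of_mem hs
    have hcyc : a * A.prod * c * B.prod = c⁻¹ := by rw [hc, hAB]; simp [mul_assoc]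
    have hBc : B ++ [c] = [] := by
      refine eq_nil (A := A) (by rw [hAB]; exact (perm_append_singleton c B).append_left A) ?_
      simp [eq_inv_mul_of_mul_eq hcyc, mul_assoc]
    exact append_ne_nil_of_right_ne_nil B (cons_ne_nil c []) hBc
  · obtain ⟨A, B, rfl⟩ := append_of_mem (hy.symm.subset (mem_append_right x (mem_singleton_self c)))
    have hAB : A ++ B ~ x := by
      simpa using (perm_middle.symm.trans hy).trans (perm_append_singleton c x)
    have hcyc : A.prod * c * B.prod = a⁻¹ := by
      have hx : x.prod = a⁻¹ * c⁻¹ := eq_inv_mul_of_mul_eq (by simpa using hc.symm)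
      simpa [hx, mul_assoc] using hprod
    obtain rfl : B = [] := by
      refine eq_nil hAB ?_
      simp [eq_inv_mul_of_mul_eq hcyc, mul_assoc]
    rw [append_nil] at hAB
    rw [(cons.inj (h.2 (a :: A) (hAB.cons a) ?_)).2]
    simpa using hprod

lemma Rigid.exists_rotate {A B : List G} (h : Rigid (A ++ B)) :
    ∃ C, C.length = A.length ∧ Rigid (B ++ C) := by
  induction A generalizing B with
  | nil => exact ⟨[], rfl, by simpa using h⟩
  | cons a A ih =>
    obtain ⟨C, hC, hBC⟩ := ih (B := B ++ [((a :: (A ++ B)).prod)⁻¹]) (by simpa using h.rotate)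
    exact ⟨((a :: (A ++ B)).prod)⁻¹ :: C, by simp [hC], by simpa using hBC⟩

lemma Rigid.reverse_inv {x : List G} (h : Rigid x) : Rigid (x.map (·⁻¹)).reverse := by
  have involutive (z : List G) : ((z.map (·⁻¹)).reverse.map (·⁻¹)).reverse = z := by simp
  refine ⟨nodup_reverse.2 (h.1.map inv_injective), fun y hy hprod ↦ ?_⟩
  rw [← involutive y, h.2 (y.map (·⁻¹)).reverse]
  · exact (reverse_perm _).trans ((hy.trans (reverse_perm _)).map (·⁻¹) |>.trans (by simp))
  · rw [← prod_inv_reverse, hprod, ← prod_inv_reverse, inv_inv]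

lemma rewProp_of_not_rigid {m n : ℕ} (hmn : m ≤ n)
    (h : ∀ x : List G, x.length = m → ¬ Rigid x) : RewProp G n := by
  intro x
  have hx : ¬ Rigid (ofFn x) := fun hr ↦ h ((ofFn x).take m) (by simp [hmn])
    (hr.of_infix (take_prefix m _).isInfix)
  by_cases hinj : Function.Injective x
  · obtain ⟨y, hy, hprod, hne⟩ : ∃ y, y ~ ofFn x ∧ y.prod = (ofFn x).prod ∧ y ≠ ofFn x := by
      simpa [Rigid, nodup_ofFn, hinj] using hx
    have hlen : y.length = n := by simpa using hy.length_eq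
    subst hlen
    have hmem (j : Fin y.length) : ∃ i, x i = y.get j := by
      simpa using hy.subset (y.get_mem j)
    choose s hs using hmem
    have hsinj : Function.Injective s := fun i j hij ↦
      (hy.nodup_iff.2 (nodup_ofFn.2 hinj)).injective_get (by rw [← hs, ← hs, hij])
    have hofFn : ofFn (x ∘ s) = y := by rw [show x ∘ s = y.get from funext hs, ofFn_get]
    refine ⟨Equiv.ofBijective s hsinj.bijective_of_finite, fun hone ↦ hne ?_, ?_⟩
    · have : s = id := congrArg (DFunLike.coe : Equiv.Perm _ → _) hone
      simpa [this] using hofFn.symm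
    · rw [Equiv.coe_ofBijective, hofFn, hprod]
  · obtain ⟨i, j, hij, hne⟩ := Function.not_injective_iff.1 hinj
    refine ⟨Equiv.swap i j, Equiv.swap_eq_one_iff.not.2 hne, congrArg (prod ∘ ofFn) ?_⟩
    rw [Equiv.comp_swap_eq_update]
    simp [hij]

end RigidWordsInGroups

section Chains

variable {G : Type*} [Group G]

/-- The quotients of consecutive terms of a chain of group elements. They form the word whose
partial products, started at the first term, are the terms of the chain. -/
def steps : List G → List G
  | a :: b :: P => a⁻¹ * b :: steps (b :: P)
  | _ => []

/-- A chain of group elements is rigid if its word of steps is rigid. This property, unlike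
rigidity of words, passes to all sublists. -/
def RigidChain (P : List G) : Prop := Rigid (steps P)

lemma steps_append_cons (A : List G) (a : G) (C : List G) :
    steps (A ++ a :: C) = steps (A ++ [a]) ++ steps (a :: C) := by
  induction A with
  | nil => simp [steps]
  | cons b A ih => cases A <;> simp_all [steps]

lemma steps_scanl (g : G) (x : List G) : steps (x.scanl (· * ·) g) = x := by
  induction x generalizing g with
  | nil => simp [steps]
  | cons a x ih =>
    have := ih (g * a)
    cases x <;> simp_all [steps]

lemma steps_concat (g : G) (Q : List G) (w : G) :
    steps (g :: Q ++ [w]) = steps (g :: Q) ++ [(Q.getLastD g)⁻¹ * w] := by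
  induction Q generalizing g with
  | nil => simp [steps]
  | cons a Q ih =>
    rw [getLastD_cons, cons_append, cons_append, steps, ← cons_append, ih, steps]
    rfl

lemma steps_prod (g : G) (Q : List G) : (steps (g :: Q)).prod = g⁻¹ * Q.getLastD g := by
  induction Q generalizing g with
  | nil => simp [steps]
  | cons a Q ih => rw [getLastD_cons, steps, prod_cons, ih, mul_assoc, mul_inv_cancel_left]

lemma RigidChain.delete {A C : List G} {b : G} (h : RigidChain (A ++ b :: C)) :
    RigidChain (A ++ C) := by
  unfold RigidChain at h ⊢
  rcases C with _ | ⟨c, C⟩ <;> rcases eq_nil_or_concat A with rfl | ⟨A, a, rfl⟩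
  · simpa [steps] using h
  · simp only [concat_eq_append, append_assoc, singleton_append, append_nil] at h ⊢
    rw [steps_append_cons] at h
    exact h.of_infix (prefix_append _ _).isInfix
  · exact h.of_infix (suffix_cons _ _).isInfix
  · simp only [concat_eq_append, append_assoc, singleton_append] at h ⊢
    rw [steps_append_cons] at h ⊢
    simpa [steps, mul_assoc] using h.mul_adjacent

lemma RigidChain.sublist {P Q : List G} (h : RigidChain Q) (hPQ : P <+ Q) : RigidChain P := by
  suffices ∀ A, RigidChain (A ++ Q) → RigidChain (A ++ P) from this [] h
  clear h
  induction hPQ with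
  | slnil => exact fun _ h ↦ h
  | cons b _ ih => exact fun A h ↦ ih A h.delete
  | cons_cons b _ ih => exact fun A h ↦ by simpa using ih (A ++ [b]) (by simpa using h)

lemma not_rigidChain_of_repeat (g u : G) : ¬ RigidChain [g, u, u] := by
  simpa [RigidChain, steps] using
    not_rigid_pair_of_commute (a := g⁻¹ * u) (b := 1) (Commute.one_right _)

end Chains

section Excluded

variable {G H : Type*} [Group G] [Group H] {n : ℕ} {a b : G}

/-- The pair `a, b` is excluded in length `n` if `b` never follows `a` immediately in a rigid word
of length `n`. -/
def Excluded (n : ℕ) (a b : G) : Prop :=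
  ∀ x : List G, x.length = n → Rigid x → ¬ [a, b] <:+: x

lemma Excluded.of_commute (h : Commute a b) : Excluded n a b :=
  fun _ _ hx hab ↦ not_rigid_pair_of_commute h (hx.of_infix hab)

lemma Excluded.of_forall_prefix (h : ∀ x : List G, x.length = n → ¬ Rigid (a :: b :: x)) :
    Excluded (n + 2) a b := by
  rintro x hlen hx ⟨A, B, rfl⟩
  obtain ⟨C, hC, hrot⟩ := Rigid.exists_rotate (append_assoc A [a, b] B ▸ hx)
  refine h (B ++ C) ?_ (by simpa using hrot)
  simp only [length_append, length_cons, length_nil] at hlen ⊢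
  omega

lemma Excluded.map (h : Excluded n a b) (φ : G ≃* H) : Excluded n (φ a) (φ b) := by
  intro x hlen hx hab
  have hrigid : Rigid (x.map φ.symm) := by
    refine Rigid.of_map φ.toMonoidHom ?_ φ.injective
    simpa [map_map, Function.comp_def] using hx
  exact h _ (by simpa using hlen) hrigid (by simpa using hab.map φ.symm)

lemma Excluded.inv (h : Excluded n a b) : Excluded n b⁻¹ a⁻¹ := by
  intro x hlen hx hab
  refine h _ (by simpa using hlen) hx.reverse_inv ?_
  simpa using reverse_infix.2 (hab.map (·⁻¹))

lemma not_rigid_of_forall_excluded (h : ∀ a b : G, Excluded (n + 2) a b) (x : List G)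
    (hlen : x.length = n + 2) : ¬ Rigid x := by
  match x, hlen with
  | a :: b :: x, hlen => exact fun hx ↦ h a b _ hlen hx (prefix_append [a, b] x).isInfix

end Excluded

section BitSets

/-
The definitions up to `checkOrbits` are made for evaluation in the kernel, which computes `Nat.add`,
`Nat.land`, … on literals directly, but would unfold the instances behind the usual notation.
Recursors in place of recursive equations, `&&` and `||` also save unfolding.
-/

/-- `f x`, with `x` evaluated first: the kernel has to bring `x` into the form of a literal in
order to see which case applies. -/
def force {α : Type} (x : ℕ) (f : ℕ → α) : α := Nat.rec (f 0) (fun n _ ↦ f (Nat.succ n)) x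

/-- The table of the numbers `f 0, …, f (n - 1)`, each written with `w` binary digits. -/
def pack (w n : ℕ) (f : ℕ → ℕ) : ℕ :=
  Nat.rec 0 (fun i T ↦ Nat.add (Nat.shiftLeft (f i) (Nat.mul w i)) T) n

/-- Entry `i` of a table whose entries have `w` binary digits. -/
def entry (w T i : ℕ) : ℕ := Nat.mod (Nat.shiftRight T (Nat.mul w i)) (Nat.pow 2 w)

/-- Membership of `i` in the set of numbers encoded by the binary digits of `S`. -/
def bit (S i : ℕ) : Bool := Nat.beq (Nat.land (Nat.shiftRight S i) 1) 1

/-- The difference of two sets of numbers. -/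
def diff (S T : ℕ) : ℕ := Nat.xor S (Nat.land S T)

/-- The set `S` without its least element. -/
def dropLow (S : ℕ) : ℕ := Nat.land S (Nat.sub S 1)

/-- The right fold of `f` over the least `n` elements of a set, in increasing order. The kernel
computes logarithms of literals only, so that `S - dropLow S` has to be evaluated first. -/
def foldBits {α : Type} (f : ℕ → α → α) (e : α) (n : ℕ) : ℕ → α :=
  Nat.rec (fun _ ↦ e) (fun _ ih S ↦ Bool.rec (force (dropLow S) fun L ↦
    force (force (Nat.sub S L) Nat.log2) fun v ↦ f v (ih L)) e (Nat.beq S 0)) n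

/-- Whether a set has at least `n` elements. -/
def atLeast (n : ℕ) : ℕ → Bool :=
  Nat.rec (fun _ ↦ true) (fun _ ih S ↦ Bool.rec (force (dropLow S) ih) false (Nat.beq S 0)) n

/-- The union of the sets `f 0, …, f (n - 1)`. -/
def orTo (n : ℕ) (f : ℕ → ℕ) : ℕ := Nat.rec 0 (fun i T ↦ Nat.lor (f i) T) n

/-- The union of the sets `f q`, where `q` runs through a list. -/
def orList {α : Type} (f : α → ℕ) (l : List α) : ℕ :=
  List.rec 0 (fun q _ T ↦ Nat.lor (f q) T) l

/-- The union of the sets `f v`, where `v < 60` runs through the set `S`. -/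
def orBits (f : ℕ → ℕ) (S : ℕ) : ℕ := foldBits (fun v T ↦ Nat.lor (f v) T) 0 60 S

/-- Whether `f v` holds for all `v < 60` in the set `S`. -/
def allBits (f : ℕ → Bool) (S : ℕ) : Bool := foldBits (fun v b ↦ Bool.rec false b (f v)) true 60 S

lemma force_eq {α : Type} (x : ℕ) (f : ℕ → α) : force x f = f x := by cases x <;> rfl

lemma rec_true_eq_or (a b : Bool) : Bool.rec b true a = (a || b) := by cases a <;> rfl

lemma entry_pack {w n i : ℕ} {f : ℕ → ℕ} (hf : ∀ j < n, f j < 2 ^ w) (hi : i < n) :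
    entry w (pack w n f) i = f i := by
  have pack_succ (k : ℕ) : pack w (k + 1) f = 2 ^ (w * k) * f k + pack w k f := by
    change f k <<< (w * k) + pack w k f = _
    rw [Nat.shiftLeft_eq, mul_comm]
  have pack_lt (k : ℕ) (hk : k ≤ n) : pack w k f < 2 ^ (w * k) := by
    induction k with
    | zero => simp [pack]
    | succ k ih =>
      rw [pack_succ, mul_add, pow_add, mul_one]
      nlinarith [ih (by omega), hf k hk]
  have pack_div (k : ℕ) (hik : i < k) (hk : k ≤ n) :
      pack w k f / 2 ^ (w * i) % 2 ^ w = f i := by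
    induction k, hik using Nat.le_induction with
    | base =>
      rw [pack_succ, Nat.mul_add_div (by positivity), Nat.div_eq_of_lt (pack_lt i hi.le), add_zero,
        Nat.mod_eq_of_lt (hf i hi)]
    | succ k hik ih =>
      obtain ⟨d, rfl⟩ := Nat.exists_eq_add_of_le hik
      have hpow : 2 ^ (w * (i + 1 + d)) = 2 ^ (w * i) * (2 ^ w * 2 ^ (w * d)) := by ring
      rw [pack_succ, hpow, mul_assoc, Nat.mul_add_div (by positivity), mul_assoc,
        Nat.mul_add_mod, ih (by omega)]
  change (pack w n f >>> (w * i)) % 2 ^ w = f i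
  rw [Nat.shiftRight_eq_div_pow, pack_div n hi le_rfl]

lemma testBit_entry (w T i v : ℕ) :
    (entry w T i).testBit v = (decide (v < w) && T.testBit (w * i + v)) := by
  change ((T >>> (w * i)) % 2 ^ w).testBit v = _
  rw [Nat.testBit_mod_two_pow, Nat.testBit_shiftRight]

lemma bit_eq (S i : ℕ) : bit S i = S.testBit i := by
  change Nat.beq ((S >>> i) &&& 1) 1 = _
  rw [Nat.testBit, Nat.and_comm 1, Nat.and_one_is_mod]
  rcases Nat.mod_two_eq_zero_or_one (S >>> i) with h | h <;> rw [h] <;> rfl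

lemma testBit_diff (S T i : ℕ) : (diff S T).testBit i = (S.testBit i && !T.testBit i) := by
  change (S ^^^ (S &&& T)).testBit i = _
  rw [Nat.testBit_xor, Nat.testBit_and]
  cases S.testBit i <;> cases T.testBit i <;> rfl

lemma testBit_orTo {n : ℕ} {f : ℕ → ℕ} {i : ℕ} :
    (orTo n f).testBit i ↔ ∃ v < n, (f v).testBit i := by
  induction n with
  | zero => simp [orTo]
  | succ n ih =>
    change (f n ||| orTo n f).testBit i ↔ _
    rw [Nat.testBit_or, Bool.or_eq_true, ih, Nat.exists_lt_succ_right, or_comm]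

lemma testBit_orList {α : Type} {f : α → ℕ} {l : List α} {i : ℕ} :
    (orList f l).testBit i ↔ ∃ q ∈ l, (f q).testBit i := by
  induction l with
  | nil => simp [orList]
  | cons q l ih =>
    change (f q ||| orList f l).testBit i ↔ _
    rw [Nat.testBit_or, Bool.or_eq_true, ih, exists_mem_cons_iff]

lemma exists_low_bit {S : ℕ} (hS : S ≠ 0) : ∃ i, S - dropLow S = 2 ^ i ∧ S.testBit i ∧
    (∀ j < i, ¬ S.testBit j) ∧ ∀ j, (dropLow S).testBit j = (S.testBit j && decide (j ≠ i)) := by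
  induction S using Nat.strong_induction_on with | _ S ih
  obtain ⟨m, rfl | rfl⟩ := Nat.even_or_odd' S
  · obtain ⟨i, hpow, hi, hlow, hdrop⟩ := ih m (by omega) (by omega)
    have hdouble : dropLow (2 * m) = 2 * dropLow m := by
      refine Nat.eq_of_testBit_eq fun j ↦ ?_
      change (2 * m &&& (2 * m - 1)).testBit j = (2 * (m &&& (m - 1))).testBit j
      rcases j with _ | j
      · simp
      · rw [Nat.testBit_and]
        simp [Nat.testBit_succ, show (2 * m - 1) / 2 = m - 1 by omega]
    refine ⟨i + 1, by omega, ?_, fun j hj ↦ ?_, fun j ↦ ?_⟩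
    · simpa [Nat.testBit_succ] using hi
    · rcases j with _ | j
      · simp
      · simpa [Nat.testBit_succ] using hlow j (by omega)
    · rw [hdouble]
      rcases j with _ | j
      · simp
      · simpa [Nat.testBit_succ] using hdrop j
  · have hdrop : dropLow (2 * m + 1) = 2 * m := by
      refine Nat.eq_of_testBit_eq fun j ↦ ?_
      change ((2 * m + 1) &&& (2 * m)).testBit j = (2 * m).testBit j
      rcases j with _ | j
      · simp
      · rw [Nat.testBit_and]
        simp [Nat.testBit_succ, Nat.mul_add_div]
    refine ⟨0, by omega, by simp, by simp, fun j ↦ ?_⟩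
    rcases j with _ | j <;> simp [hdrop, Nat.testBit_succ, Nat.mul_add_div]

lemma foldBits_sound {α : Type} {f : ℕ → α → α} {e : α} {Q : α → Prop} {v : ℕ}
    (hv : ∀ t, Q (f v t)) (hf : ∀ u t, Q t → Q (f u t)) {n S : ℕ} (hS : S.testBit v)
    (hn : ∀ j, j + n ≤ v → ¬ S.testBit j) : Q (foldBits f e n S) := by
  induction n generalizing S with
  | zero => exact absurd hS (hn v le_rfl)
  | succ n ih =>
    have hS0 : S ≠ 0 := by rintro rfl; simp at hS
    obtain ⟨i, hpow, hi, hlow, hdrop⟩ := exists_low_bit hS0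
    have hfold : foldBits f e (n + 1) S = f i (foldBits f e n (dropLow S)) := by
      change (Bool.rec (force (dropLow S) fun L ↦ force (force (S - L) Nat.log2) fun v ↦
        f v (foldBits f e n L)) e (Nat.beq S 0) : α) = _
      rw [Bool.eq_false_iff.2 fun h ↦ hS0 (Nat.eq_of_beq_eq_true h)]
      simp only [force_eq, hpow, Nat.log2_two_pow]
    rw [hfold]
    rcases eq_or_ne v i with rfl | hvi
    · exact hv _
    · refine hf i _ (ih (by simp [hdrop, hS, hvi]) fun j hj ↦ ?_)
      have : i < v := (not_lt.1 fun h ↦ hlow v h hS).lt_of_ne' hvi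
      grind

lemma testBit_orBits {f : ℕ → ℕ} {S v i : ℕ} (hv : v < 60) (hS : S.testBit v)
    (hi : (f v).testBit i) : (orBits f S).testBit i :=
  foldBits_sound (Q := fun T : ℕ ↦ T.testBit i) (n := 60) (fun T ↦ by simp [hi])
    (fun u T h ↦ by simp [h]) hS fun j hj ↦ by omega

lemma of_allBits {f : ℕ → Bool} {S v : ℕ} (h : allBits f S) (hv : v < 60) (hS : S.testBit v) :
    f v :=
  foldBits_sound (Q := fun b ↦ b → f v) (e := true) (fun t ↦ by cases f v <;> simp)
    (fun u t ht ↦ by cases f u; exacts [nofun, ht]) hS (fun j hj ↦ by omega) h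

lemma atLeast_of_card_le {n S : ℕ} {s : Finset ℕ} (hs : ∀ v ∈ s, S.testBit v)
    (hn : n ≤ s.card) : atLeast n S := by
  induction n generalizing S s with
  | zero => rfl
  | succ n ih =>
    obtain ⟨v, hv⟩ := Finset.card_pos.1 (by omega : 0 < s.card)
    have hS0 : S ≠ 0 := by rintro rfl; simpa using hs v hv
    obtain ⟨i, -, -, -, hdrop⟩ := exists_low_bit hS0
    have hrest : atLeast n (dropLow S) := by
      refine ih (s := s.erase i) (fun v hv ↦ ?_) ?_
      · rw [Finset.mem_erase] at hv
        simp [hdrop, hs v hv.2, hv.1]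
      · exact (Nat.le_sub_one_of_lt hn).trans Finset.pred_card_le_card_erase
    change Bool.rec (force (dropLow S) (atLeast n)) false (Nat.beq S 0) = true
    rw [force_eq, hrest, Bool.eq_false_iff.2 fun h ↦ hS0 (Nat.eq_of_beq_eq_true h)]

end BitSets

section Codes

/-- The image of the point `i` under the element of `A₅` with code `n = 12 * a + 4 * c + v`, where
`a < 5`, `c < 3` and `v < 4`. This element first fixes `4` and acts on `0, …, 3` as the `c`-th power
of the cycle `(1 2 3)`, followed by the exclusive or with `v`; then it adds `a` modulo `5`.
In particular `0` is the code of the identity. -/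
def act (n i : ℕ) : ℕ :=
  bif Nat.beq i 4 then (4 + n / 12) % 5
  else (((bif Nat.beq i 0 then 0 else (i - 1 + n / 4 % 3) % 3 + 1) ^^^ (n % 4)) + n / 12) % 5

/-- The code of the even permutation `f` of the points `0, …, 4`. -/
def codeOf (f : ℕ → ℕ) : ℕ :=
  force (Nat.mod (Nat.succ (f 4)) 5) fun a ↦
    force (Nat.mod (Nat.add (f 0) (Nat.sub 5 a)) 5) fun v ↦
      Nat.add (Nat.mul 12 a) (Nat.add (Nat.mul 4
        (Nat.pred (Nat.xor (Nat.mod (Nat.add (f 1) (Nat.sub 5 a)) 5) v))) v)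

/-- The table of `act`. -/
def imageTable : ℕ := pack 3 300 fun k ↦ act (k / 5) (k % 5)

/-- The image of a point under the element with code `n`, looked up in the table. -/
def image (n i : ℕ) : ℕ := entry 3 imageTable (Nat.add (Nat.mul 5 n) i)

/-- The position of a pair of codes in a table with `60 * 60` entries. -/
def pairIndex (a b : ℕ) : ℕ := Nat.add (Nat.mul 60 a) b

/-- The set of pairs of codes whose only element is `a, b`. -/
def pairBit (a b : ℕ) : ℕ := Nat.shiftLeft 1 (pairIndex a b)

/-- The multiplication table of `A₅`. -/
def mulTable : ℕ := pack 6 3600 fun k ↦ codeOf fun i ↦ image (k / 60) (image (k % 60) i)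

/-- Multiplication of codes. -/
def mul (a b : ℕ) : ℕ := entry 6 mulTable (pairIndex a b)

/-- The table of inverses in `A₅`, computed as `59`-th powers. -/
def invTable : ℕ := pack 6 60 fun a ↦ Nat.rec 0 (fun _ ↦ mul a) 59

/-- Inversion of codes. -/
def inv (a : ℕ) : ℕ := entry 6 invTable a

/-- The code of `a⁻¹ * b`. -/
def ldiv (a b : ℕ) : ℕ := mul (inv a) b

/-- The transposition of the points `0` and `1`. -/
def swapPoint (i : ℕ) : ℕ := bif Nat.beq i 0 then 1 else bif Nat.beq i 1 then 0 else i

/-- The action on codes of the conjugation by the transposition of `0` and `1`. -/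
def swapCode (a : ℕ) : ℕ := codeOf fun i ↦ swapPoint (image a (swapPoint i))

/-- The set of all codes. -/
def allCodes : ℕ := Nat.sub (Nat.pow 2 60) 1

/-- The code of an element of `A₅`. -/
def code (s : alternatingGroup (Fin 5)) : ℕ := codeOf fun i ↦ s.1 (Fin.ofNat 5 i)

/-- The pair `a, b` belongs to the set of pairs of codes that is encoded by `T`. -/
def HasPair (T : ℕ) (a b : alternatingGroup (Fin 5)) : Prop :=
  T.testBit (pairIndex (code a) (code b))

lemma code_lt : ∀ s, code s < 60 := by decide +kernel

lemma act_code : ∀ s, ∀ i : Fin 5, act (code s) i = s.1 i := by decide +kernel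

lemma exists_code_eq : ∀ n < 60, ∃ s, code s = n := by decide +kernel

lemma code_one : code 1 = 0 := by decide +kernel

lemma code_injective : Function.Injective code := fun a b h ↦
  Subtype.ext (Equiv.ext fun i ↦ Fin.ext (by rw [← act_code, h, act_code]))

lemma codeOf_congr {f g : ℕ → ℕ} (h : ∀ i < 5, f i = g i) : codeOf f = codeOf g := by
  simp only [codeOf, h 0 (by norm_num), h 1 (by norm_num), h 4 (by norm_num)]

variable {a b v w : alternatingGroup (Fin 5)}

lemma testBit_allCodes : allCodes.testBit (code a) := by
  change (2 ^ 60 - 1).testBit (code a) = true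
  rw [Nat.testBit_two_pow_sub_one, decide_eq_true (code_lt a)]

lemma hasPair_pairBit : HasPair (pairBit (code a) (code b)) v w ↔ a = v ∧ b = w := by
  change (1 <<< (60 * code a + code b)).testBit (60 * code v + code w) = true ↔ _
  rw [Nat.one_shiftLeft, Nat.testBit_two_pow, decide_eq_true_eq, ← code_injective.eq_iff,
    ← code_injective.eq_iff (a := b)]
  have hb := code_lt b
  have hw := code_lt w
  omega

lemma testBit_entry_code {T : ℕ} : (entry 60 T (code v)).testBit (code w) ↔ HasPair T v w := by
  simp [testBit_entry, code_lt, HasPair, pairIndex]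

lemma hasPair_orBits {f : ℕ → ℕ} {S : ℕ} (hv : S.testBit (code v))
    (hw : (f (code v)).testBit (code w)) :
    HasPair (orBits (fun v ↦ Nat.shiftLeft (f v) (Nat.mul 60 v)) S) v w := by
  refine testBit_orBits (code_lt v) hv ?_
  change (f (code v) <<< (60 * code v)).testBit (60 * code v + code w) = true
  simp [Nat.testBit_shiftLeft, hw]

lemma image_code (i : Fin 5) : image (code a) i = a.1 i := by
  have hact (k : ℕ) : act (k / 5) (k % 5) < 2 ^ 3 := by
    have (m : ℕ) : m % 5 < 2 ^ 3 := (Nat.mod_lt m (by norm_num)).trans (by norm_num)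
    unfold act
    cases Nat.beq (k % 5) 4 <;> exact this _
  have hlt := code_lt a
  change entry 3 imageTable (5 * code a + i) = _
  rw [imageTable, entry_pack (fun k _ ↦ hact k) (by omega), ← act_code]
  congr 1 <;> omega

lemma codeOf_image_image :
    (codeOf fun i ↦ image (code a) (image (code b) i)) = code (a * b) := by
  refine codeOf_congr fun i hi ↦ ?_
  lift i to Fin 5 using hi
  simp [image_code]

lemma mul_code : mul (code a) (code b) = code (a * b) := by
  have hlt (k : ℕ) (hk : k < 3600) :
      (codeOf fun i ↦ image (k / 60) (image (k % 60) i)) < 2 ^ 6 := by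
    obtain ⟨s, hs⟩ := exists_code_eq (k / 60) (by omega)
    obtain ⟨t, ht⟩ := exists_code_eq (k % 60) (by omega)
    rw [← hs, ← ht, codeOf_image_image]
    exact (code_lt _).trans (by norm_num)
  have ha := code_lt a
  have hb := code_lt b
  change entry 6 mulTable (60 * code a + code b) = _
  rw [mulTable, entry_pack hlt (by omega), show (60 * code a + code b) / 60 = code a by omega,
    show (60 * code a + code b) % 60 = code b by omega, codeOf_image_image]

lemma inv_code : inv (code a) = code a⁻¹ := by
  have hpow (s : alternatingGroup (Fin 5)) (n : ℕ) :
      Nat.rec 0 (fun _ ↦ mul (code s)) n = code (s ^ n) := by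
    induction n with
    | zero => exact code_one.symm
    | succ n ih => rw [pow_succ', ← mul_code, ← ih]
  have hlt (k : ℕ) (hk : k < 60) : Nat.rec 0 (fun _ ↦ mul k) 59 < 2 ^ 6 := by
    obtain ⟨s, rfl⟩ := exists_code_eq k hk
    rw [hpow]
    exact (code_lt _).trans (by norm_num)
  have hcard : Fintype.card (alternatingGroup (Fin 5)) = 60 := by
    rw [card_alternatingGroup, Fintype.card_fin]
    rfl
  rw [inv, invTable, entry_pack hlt (code_lt a), hpow, eq_inv_of_mul_eq_one_left
    (a := a ^ 59) (b := a) (by rw [← pow_succ, ← pow_card_eq_one (x := a), hcard])]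

lemma ldiv_code : ldiv (code a) (code b) = code (a⁻¹ * b) := by
  rw [ldiv, inv_code, mul_code]

/-- The automorphism of `A₅` which conjugates by the transposition of `0` and `1`. -/
def swapAut : MulAut (alternatingGroup (Fin 5)) := MulAut.conjNormal (Equiv.swap 0 1)

lemma swapCode_code : swapCode (code a) = code (swapAut a) := by
  have hswap : ∀ i : Fin 5, swapPoint i = Equiv.swap (0 : Fin 5) 1 i := by decide
  refine codeOf_congr fun i hi ↦ ?_
  lift i to Fin 5 using hi
  simp [hswap, image_code, swapAut, MulAut.conjNormal_apply]

end Codes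

section Obstructions

/-- The set of pairs `b, w` with `b * w * v = w`. -/
def fixTable (v : ℕ) : ℕ :=
  orTo 60 fun w ↦ pairBit (mul w (inv (mul w v))) w

/-- The set of all `w` with `b * w * v = w`. -/
def fixedBy (b v : ℕ) : ℕ := force v fun v ↦ entry 60 (fixTable v) b

/-- The product of a list of codes. -/
def mulList (l : List ℕ) : ℕ := List.rec 0 (fun i _ ih ↦ mul i ih) l

/-- The pairs `A.prod, B.prod` for the arrangements `A ++ z :: B` of the word `x ++ [z]`, where `x`
has at most four letters, that are to be tested; the multiplication and its unit are `m` and `e`.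
Arrangements which start with the first letter, end with `z`, or leave two neighbours next to each
other, in order, are omitted: they amount to arrangements of shorter words. -/
def arrangements {α : Type} (m : α → α → α) (e : α) : List α → List (α × α)
  | [a] => [(e, a)]
  | [a, b] => [(e, m b a)]
  | [a, b, c] => [(e, m a (m c b)), (e, m b (m a c)), (e, m c (m b a)), (b, m a c), (b, m c a),
      (m b a, c), (m c a, b), (m c b, a)]
  | [a, b, c, d] => [(e, m a (m c (m b d))), (e, m a (m d (m c b))), (e, m b (m a (m d c))),
      (e, m b (m d (m a c))), (e, m b (m d (m c a))), (e, m c (m a (m d b))),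
      (e, m c (m b (m a d))), (e, m c (m b (m d a))), (e, m d (m a (m c b))),
      (e, m d (m b (m a c))), (e, m d (m c (m b a))), (b, m a (m d c)), (b, m c (m a d)),
      (b, m d (m a c)), (b, m d (m c a)), (m b a, m d c), (m b (m a c), d), (m b (m d a), c),
      (m b (m d c), a), (c, m a (m d b)), (c, m b (m a d)), (c, m b (m d a)), (c, m d (m b a)),
      (m c a, m b d), (m c a, m d b), (m c b, m a d), (m c b, m d a), (m c (m b a), d),
      (m d a, m c b), (m d (m a c), b), (m d b, m a c), (m d b, m c a), (m d (m b a), c),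
      (m d c, m b a), (m d (m c a), b), (m d (m c b), a)]
  | _ => []

/-- The set of all `w` such that some of the `arrangements` has the same product as the word
`x ++ [h * w]`, where `x` is a word of product `g⁻¹ * h⁻¹`: for the products `A` and `B` around
`h * w`, this means that `g * A * h * w * B = w`. -/
def solve (g h : ℕ) (x : List ℕ) : ℕ :=
  orList (fun q ↦ Prod.rec (fun A B ↦ fixedBy (mul (mul g A) h) B) q) (arrangements mul 0 x)

/-- The union of `solve` over the chains from which `w` may follow: those obtained by omitting
terms of `l` from a chain that consists of `l`, in reverse order, of `g`, and of further terms which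
are reached from `g` by the steps `x` and of which `h⁻¹` is the last one. -/
def forbidden (h : ℕ) (l : List ℕ) : ℕ → List ℕ → ℕ :=
  List.rec (fun g x ↦ solve g h x)
    (fun a _ ih g x ↦ Nat.lor (ih g x) (force (ldiv a g) fun y ↦ ih a (y :: x))) l

lemma arrangements_map {α β : Type} {m : α → α → α} {m' : β → β → β} {f : α → β}
    (hf : ∀ a b, f (m a b) = m' (f a) (f b)) (e : α) (x : List α) :
    arrangements m' (f e) (x.map f) = (arrangements m e x).map (Prod.map f f) := by
  rcases x with _ | ⟨a, _ | ⟨b, _ | ⟨c, _ | ⟨d, _ | ⟨e, x⟩⟩⟩⟩⟩ <;> simp [arrangements, hf]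

lemma perm_of_mem_arrangements {α : Type} {x : List α} {q : List α × List α}
    (hq : q ∈ arrangements (· ++ ·) [] (x.map fun a ↦ [a])) : q.1 ++ q.2 ~ x ∧ q.2 ≠ [] := by
  classical
  rcases x with _ | ⟨a, _ | ⟨b, _ | ⟨c, _ | ⟨d, _ | ⟨e, x⟩⟩⟩⟩⟩
  case nil => cases hq
  case cons.cons.cons.cons.cons => cases hq
  all_goals
    revert q
    simp only [map_cons, map_nil, arrangements, cons_append, nil_append, forall_mem_cons,
      not_mem_nil, false_implies, implies_true, and_true, perm_iff_count, count_append, count_cons,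
      count_nil, ne_eq, reduceCtorEq, not_false_eq_true]
    and_intros <;> intro c <;> omega

lemma exists_prod_eq_of_mem_arrangements {M : Type} [Monoid M] {x : List M} {p : M × M}
    (hp : p ∈ arrangements (· * ·) 1 x) :
    ∃ A B : List M, A ++ B ~ x ∧ B ≠ [] ∧ A.prod = p.1 ∧ B.prod = p.2 := by
  have hmap := arrangements_map (m := (· ++ ·)) (m' := (· * ·)) (f := (prod : List M → M))
    (fun _ _ ↦ prod_append) [] (x.map fun a ↦ [a])
  rw [map_map, show prod ∘ (fun a : M ↦ [a]) = id from funext fun a ↦ prod_singleton, map_id,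
    prod_nil] at hmap
  rw [hmap] at hp
  obtain ⟨⟨A, B⟩, hAB, rfl⟩ := mem_map.1 hp
  obtain ⟨hperm, hB⟩ := perm_of_mem_arrangements hAB
  exact ⟨A, B, hperm, hB, rfl, rfl⟩

variable {g h v w : alternatingGroup (Fin 5)} {Q l x : List (alternatingGroup (Fin 5))}

lemma mul_mul_eq_of_testBit_fixedBy {b v w : alternatingGroup (Fin 5)}
    (h : (fixedBy (code b) (code v)).testBit (code w)) : b * w * v = w := by
  rw [fixedBy, force_eq, testBit_entry_code, HasPair, fixTable, testBit_orTo] at h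
  obtain ⟨n, hn, hbit⟩ := h
  obtain ⟨u, rfl⟩ := exists_code_eq n hn
  rw [mul_code, inv_code, mul_code] at hbit
  obtain ⟨rfl, rfl⟩ := hasPair_pairBit.1 hbit
  group

lemma mulList_code (x : List (alternatingGroup (Fin 5))) : mulList (x.map code) = code x.prod := by
  induction x with
  | nil => exact code_one.symm
  | cons a x ih => rw [prod_cons, ← mul_code, ← ih]; rfl

lemma RigidChain.not_testBit_solve (hP : RigidChain (g :: Q ++ [w])) :
    ¬ (solve (code g) (code (Q.getLastD g)⁻¹) ((steps (g :: Q)).map code)).testBit (code w) := by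
  rw [solve, ← code_one, arrangements_map fun _ _ ↦ mul_code.symm, testBit_orList]
  rintro ⟨_, hq, hw⟩
  obtain ⟨p, hp, rfl⟩ := mem_map.1 hq
  obtain ⟨A, B, hperm, hB, hA', hB'⟩ := exists_prod_eq_of_mem_arrangements hp
  change (fixedBy (mul (mul (code g) (code p.1)) (code _)) (code p.2)).testBit _ = true at hw
  rw [mul_code, mul_code, ← hA', ← hB'] at hw
  rw [RigidChain, steps_concat] at hP
  refine hP.prod_mul_mul_ne hperm hB (mul_left_cancel (a := g) ?_)
  rw [steps_prod]
  simpa [mul_assoc] using mul_mul_eq_of_testBit_fixedBy hw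

lemma RigidChain.not_testBit_forbidden (hP : RigidChain (l.reverse ++ g :: Q ++ [w])) :
    ¬ (forbidden (code (Q.getLastD g)⁻¹) (l.map code) (code g)
      ((steps (g :: Q)).map code)).testBit (code w) := by
  induction l generalizing g Q with
  | nil => exact hP.not_testBit_solve
  | cons a l ih =>
    have hcons : forbidden (code (Q.getLastD g)⁻¹) (code a :: l.map code) (code g)
        ((steps (g :: Q)).map code) = forbidden _ (l.map code) _ ((steps (g :: Q)).map code) |||
          force (ldiv (code a) (code g)) fun y ↦ forbidden _ (l.map code) _ (y :: _) := rfl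
    rw [map_cons, hcons, Nat.testBit_or, Bool.or_eq_true, force_eq, ldiv_code]
    rintro (hw | hw)
    · exact ih (hP.sublist (by simp)) hw
    · have hnot := ih (g := a) (Q := g :: Q) (by simpa using hP)
      rw [getLastD_cons, steps, map_cons] at hnot
      exact hnot hw

end Obstructions

section Leaves

/-- Whether `f a r` holds for some way to pick an element `a` from a list, leaving the list `r` up
to its order. -/
def anyPick (f : ℕ → List ℕ → Bool) (l : List ℕ) : Bool :=
  List.rec (fun _ ↦ false) (fun a l ih f ↦ Bool.rec (ih fun b r ↦ f b (a :: r)) true (f a l)) l f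

/-- Whether some arrangement of the `n` letters of a list has product `g`. -/
def reaches : ℕ → List ℕ → ℕ → Bool :=
  Nat.rec (fun _ g ↦ Nat.beq g 0) fun _ ih l g ↦ anyPick (fun a r ↦ force (ldiv a g) (ih r)) l

/-- Whether some arrangement of a word has the same product and another first letter. -/
def rewritable : List ℕ → Bool
  | [] => false
  | a :: l => force (mul a (mulList l)) fun t ↦
      anyPick (fun b r ↦ force (ldiv b t) (reaches (Nat.succ r.length) (a :: r))) l

/-- Whether some suffix of a word is rewritable. Short suffixes are tried first. -/
def rewritableSuffix (x : List ℕ) : Bool :=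
  List.rec false (fun a l ih ↦ Bool.rec (rewritable (a :: l)) true ih) x

variable {g : alternatingGroup (Fin 5)} {l x : List (alternatingGroup (Fin 5))}

lemma exists_perm_of_anyPick {f : ℕ → List ℕ → Bool} (h : anyPick f (l.map code)) :
    ∃ a r, a :: r ~ l ∧ f (code a) (r.map code) := by
  induction l generalizing f with
  | nil => cases h
  | cons a l ih =>
    change Bool.rec (anyPick (fun b r ↦ f b (code a :: r)) (l.map code)) true
      (f (code a) (l.map code)) = true at h
    rw [rec_true_eq_or, Bool.or_eq_true] at h
    rcases h with h | h
    · exact ⟨a, l, .refl _, h⟩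
    · obtain ⟨b, r, hperm, hf⟩ := ih h
      exact ⟨b, a :: r, (Perm.swap a b r).trans (hperm.cons a), hf⟩

lemma exists_prod_eq_of_reaches {n : ℕ} (hl : l.length = n)
    (h : reaches n (l.map code) (code g)) : ∃ y, y ~ l ∧ y.prod = g := by
  induction n generalizing l g with
  | zero =>
    obtain rfl := length_eq_zero_iff.1 hl
    exact ⟨[], .refl _, (code_injective ((Nat.eq_of_beq_eq_true h).trans code_one.symm)).symm⟩
  | succ n ih =>
    obtain ⟨a, r, hperm, hf⟩ := exists_perm_of_anyPick h
    rw [force_eq, ldiv_code] at hf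
    have hr : r.length = n := by simpa [hl] using hperm.length_eq
    obtain ⟨y, hy, hprod⟩ := ih hr hf
    exact ⟨a :: y, (hy.cons a).trans hperm, by rw [prod_cons, hprod, mul_inv_cancel_left]⟩

lemma not_rigid_of_rewritable (h : rewritable (x.map code)) : ¬ Rigid x := by
  rcases x with _ | ⟨a, l⟩
  · cases h
  · simp only [map_cons, rewritable, force_eq, mulList_code, mul_code] at h
    obtain ⟨b, r, hperm, hf⟩ := exists_perm_of_anyPick h
    rw [ldiv_code, length_map, ← map_cons] at hf
    obtain ⟨y, hy, hprod⟩ := exists_prod_eq_of_reaches length_cons hf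
    refine fun hr ↦ hr.prod_cons_ne (hperm.subset mem_cons_self) (y := y) ?_ ?_
    · exact (hy.cons b).trans ((Perm.swap a b r).trans (hperm.cons a))
    · rw [prod_cons, hprod, prod_cons, mul_inv_cancel_left]

lemma not_rigid_of_rewritableSuffix (h : rewritableSuffix (x.map code)) : ¬ Rigid x := by
  induction x with
  | nil => cases h
  | cons a x ih =>
    change Bool.rec (rewritable (code a :: x.map code)) true (rewritableSuffix (x.map code)) =
      true at h
    rw [rec_true_eq_or, Bool.or_eq_true] at h
    rcases h with h | h
    · exact fun hr ↦ ih h (hr.of_infix (suffix_cons a x).isInfix)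
    · exact not_rigid_of_rewritable h

end Leaves

section Search

/-- The set of all `w`, up to those for which `1, p, q, w` is seen not to be a rigid chain. -/
def candidates (p q : ℕ) : ℕ :=
  diff allCodes (Nat.lor (force (inv q) fun h ↦ forbidden h [p, 0] q [])
    (force (inv p) fun h ↦ forbidden h [0] p []))

/-- The pairs `u, w` of elements of `C`, up to those for which `1, p, q, u, w` is seen not to be a
rigid chain. -/
def pairTable (p q C : ℕ) : ℕ :=
  orBits (fun u ↦ Nat.shiftLeft
    (diff C (force (inv u) fun h ↦ forbidden h [q, p, 0] u [])) (Nat.mul 60 u)) C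

/-- The pairs `v, w` such that all pairs from `u, v, w` belong to `A`, up to those for which
`1, p, q, u, v, w` is seen not to be a rigid chain. -/
def tripleTable (p q A u : ℕ) : ℕ :=
  orBits (fun v ↦ Nat.shiftLeft
    (diff (Nat.land (entry 60 A u) (entry 60 A v))
      (force (inv v) fun h ↦ force (ldiv u v) fun y ↦ forbidden h [q, p, 0] u [y]))
    (Nat.mul 60 v)) (entry 60 A u)

/-- Whether it can be checked that no rigid chain arises when a chain which ends in `g` is
prolonged by `k` terms from the set `S`. The last letter of its word is `b`, and `x` is its word in
reverse order. Here `E` is a set of pairs of letters which may not be neighbours, `R` is a set of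
pairs of terms which may both occur, and `row v` is the set of pairs which may both occur after the
term `v`. The set `S'` is stored in the block of `R` for the identity, which is not read, to spread
the hash values of the tables in the kernel. -/
def search (E : ℕ) (row : ℕ → ℕ) : ℕ → ℕ → ℕ → ℕ → ℕ → List ℕ → Bool :=
  Nat.rec (fun _ _ _ _ x ↦ rewritableSuffix x.reverse) fun k ih S R g b x ↦
    allBits (fun v ↦ force (ldiv g v) fun c ↦ Bool.rec
      (force (Nat.land S (entry 60 R v)) fun S' ↦ Bool.rec true
        (force (Nat.lor (Nat.land R (row v)) S') fun R' ↦ ih S' R' v c (c :: x)) (atLeast k S'))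
      true (bit E (pairIndex b c))) S

/-- Whether it can be checked that no rigid word of eight letters starts with `a, b`, if no pair
from the set `E` occurs in such a word. -/
def checkPair (E a b : ℕ) : Bool :=
  force E fun E ↦ force (mul a b) fun q ↦ force (candidates a q) fun C ↦
    force (pairTable a q C) fun A ↦ search E (tripleTable a q A) 6 C A q b [b, a]

variable {p q u v w a b g : alternatingGroup (Fin 5)}

lemma RigidChain.testBit_candidates (h : RigidChain [1, p, q, w]) :
    (candidates (code p) (code q)).testBit (code w) := by
  have h₁ := RigidChain.not_testBit_forbidden (l := [p, 1]) (g := q) (Q := []) h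
  have h₂ := RigidChain.not_testBit_forbidden (l := [1]) (g := p) (Q := [])
    (h.sublist (P := [1, p, w]) (by simp))
  simp only [map_cons, map_nil, code_one, steps, getLastD_nil, Bool.not_eq_true] at h₁ h₂
  rw [candidates, testBit_diff, force_eq, force_eq, inv_code, inv_code]
  change (allCodes.testBit _ && !(_ ||| _ : ℕ).testBit _) = true
  rw [testBit_allCodes, Nat.testBit_or, h₁, h₂]
  rfl

lemma RigidChain.hasPair_pairTable {C : ℕ} (h : RigidChain [1, p, q, v, w])
    (hv : C.testBit (code v)) (hw : C.testBit (code w)) :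
    HasPair (pairTable (code p) (code q) C) v w := by
  have hnot := RigidChain.not_testBit_forbidden (l := [q, p, 1]) (g := v) (Q := []) h
  simp only [map_cons, map_nil, code_one, steps, getLastD_nil, Bool.not_eq_true] at hnot
  refine hasPair_orBits hv ?_
  rw [testBit_diff, force_eq, inv_code, hw, hnot]
  rfl

lemma RigidChain.hasPair_tripleTable {A : ℕ} (h : RigidChain [1, p, q, u, v, w])
    (huv : HasPair A u v) (huw : HasPair A u w) (hvw : HasPair A v w) :
    HasPair (tripleTable (code p) (code q) A (code u)) v w := by
  rw [← testBit_entry_code] at huv huw hvw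
  have hnot := RigidChain.not_testBit_forbidden (l := [q, p, 1]) (g := u) (Q := [v]) h
  simp only [map_cons, map_nil, code_one, steps, getLastD_cons, getLastD_nil,
    Bool.not_eq_true] at hnot
  refine hasPair_orBits huv ?_
  rw [testBit_diff, force_eq, force_eq, inv_code, ldiv_code, hnot]
  change ((entry _ _ _ &&& entry _ _ _).testBit _ && _) = true
  rw [Nat.testBit_and, huw, hvw]
  rfl

lemma triplewise_of_forall_sublist {α : Type*} {p : α → α → α → Prop} {l : List α}
    (h : ∀ a b c, [a, b, c] <+ l → p a b c) : l.Triplewise p := by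
  induction l with
  | nil => exact .nil
  | cons a l ih =>
    refine triplewise_cons.2 ⟨pairwise_iff_forall_sublist.2 fun hbc ↦ h _ _ _ (hbc.cons_cons a),
      ih fun b c d hbcd ↦ h b c d (hbcd.cons a)⟩

lemma search_succ (E : ℕ) (row : ℕ → ℕ) (k S R g b : ℕ) (x : List ℕ) :
    search E row (k + 1) S R g b x = allBits (fun v ↦ bit E (pairIndex b (ldiv g v)) ||
      (!atLeast k (S &&& entry 60 R v) || search E row k (S &&& entry 60 R v)
        (R &&& row v ||| S &&& entry 60 R v) v (ldiv g v) (ldiv g v :: x))) S := by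
  have rec_eq_not_or (a b : Bool) : Bool.rec true b a = (!a || b) := by cases a <;> rfl
  simp only [search, force_eq, rec_true_eq_or, rec_eq_not_or]
  rfl

lemma not_rigid_of_search {E : ℕ} {row : ℕ → ℕ} {k S R : ℕ}
    {D X : List (alternatingGroup (Fin 5))} (hlen : D.length = k) (hD : D.Nodup)
    (hS : ∀ v ∈ D, S.testBit (code v)) (hR : D.Pairwise (HasPair R))
    (hrow : D.Triplewise fun u ↦ HasPair (row (code u)))
    (hE : (b :: steps (g :: D)).IsChain fun a b ↦ ¬ HasPair E a b)
    (h : search E row k S R (code g) (code b) (X.map code)) :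
    ¬ Rigid (X.reverse ++ steps (g :: D)) := by
  induction k generalizing S R D X g b with
  | zero =>
    obtain rfl := length_eq_zero_iff.1 hlen
    change rewritableSuffix (X.map code).reverse = true at h
    rw [← map_reverse] at h
    simpa [steps] using not_rigid_of_rewritableSuffix h
  | succ k ih =>
    obtain ⟨v, D, rfl⟩ := exists_cons_of_length_eq_add_one hlen
    rw [length_cons, Nat.add_right_cancel_iff] at hlen
    rw [nodup_cons] at hD
    rw [pairwise_cons] at hR
    rw [triplewise_cons] at hrow
    rw [steps, isChain_cons_cons] at hE
    have hS' : ∀ w ∈ D, (S &&& entry 60 R (code v)).testBit (code w) := fun w hw ↦ by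
      rw [Nat.testBit_and, hS w (mem_cons_of_mem v hw), testBit_entry_code.2 (hR.1 w hw)]
      rfl
    have hcard : atLeast k (S &&& entry 60 R (code v)) := by
      refine atLeast_of_card_le (s := (D.map code).toFinset) (fun c hc ↦ ?_) ?_
      · obtain ⟨w, hw, rfl⟩ := mem_map.1 (mem_toFinset.1 hc)
        exact hS' w hw
      · rw [toFinset_card_of_nodup (hD.2.map code_injective), length_map, hlen]
    have hR' : D.Pairwise (HasPair
        (R &&& row (code v) ||| (S &&& entry 60 R (code v)))) := by
      refine hR.2.imp₂ (fun a b hab hab' ↦ ?_) hrow.1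
      rw [HasPair, Nat.testBit_or, Nat.testBit_and, hab, hab']
      rfl
    rw [search_succ] at h
    have hv := of_allBits h (code_lt v) (hS v mem_cons_self)
    rw [ldiv_code, bit_eq, Bool.eq_false_iff.2 hE.1, hcard] at hv
    have := ih (X := (g⁻¹ * v) :: X) hlen hD.2 hS' hR' hrow.2 hE.2 hv
    simpa [steps] using this

lemma Excluded.of_checkPair {E : ℕ} (hE : ∀ c d, HasPair E c d → Excluded 8 c d)
    (h : checkPair E (code a) (code b)) : Excluded 8 a b := by
  refine .of_forall_prefix fun x hlen hx ↦ ?_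
  obtain ⟨D, hD⟩ : ∃ D, x.scanl (· * ·) (a * b) = a * b :: D := by
    cases x <;> simp
  have hsteps : steps (a * b :: D) = x := by rw [← hD, steps_scanl]
  have hDlen : D.length = 6 := by
    have := congrArg length hD
    simp only [length_scanl, hlen, length_cons] at this
    omega
  have hP : RigidChain (1 :: a :: a * b :: D) := by
    simpa [RigidChain, steps, hsteps] using hx
  have hsub {u : List (alternatingGroup (Fin 5))} (hu : u <+ D) :
      RigidChain (1 :: a :: a * b :: u) :=
    hP.sublist (((hu.cons_cons _).cons_cons _).cons_cons _)
  simp only [checkPair, force_eq, mul_code] at h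
  have hC {v} (hv : v ∈ D) := (hsub (singleton_sublist.2 hv)).testBit_candidates
  have hA {v w} (hvw : [v, w] <+ D) := (hsub hvw).hasPair_pairTable
    (hC (hvw.subset (by simp))) (hC (hvw.subset (by simp)))
  refine not_rigid_of_search (g := a * b) (b := b) (X := [b, a]) (D := D) hDlen ?_
    (fun v ↦ hC) (pairwise_iff_forall_sublist.2 hA) (triplewise_of_forall_sublist ?_) ?_ h ?_
  · refine nodup_iff_sublist.2 fun u hu ↦ not_rigidChain_of_repeat 1 u (hP.sublist ?_)
    exact (((hu.cons _).cons _).cons_cons _)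
  · intro u v w huvw
    exact (hsub huvw).hasPair_tripleTable (hA (.trans (by simp) huvw)) (hA (.trans (by simp) huvw))
      (hA (.trans (by simp) huvw))
  · rw [hsteps]
    refine isChain_iff_forall_rel_of_append_cons_cons.2 fun {c d l₁ l₂} hl hcd ↦ ?_
    refine hE c d hcd (a :: b :: x) (by simp [hlen]) hx ⟨a :: l₁, l₂, ?_⟩
    simp [hl]
  · simpa [hsteps] using hx

end Search

section Orbits

/-- The conjugate `s * a * s⁻¹`. -/
def conj (s a : ℕ) : ℕ := mul (mul s a) (inv s)

/-- The orbit of the pair `a, b` under the automorphisms of `A₅` and `a, b ↦ b⁻¹, a⁻¹`. -/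
def orbit (a b : ℕ) : ℕ :=
  orTo 60 fun s ↦ orList (fun q ↦ pairBit (conj s q.1) (conj s q.2))
    [(a, b), (inv b, inv a), (swapCode a, swapCode b), (inv (swapCode b), inv (swapCode a))]

/-- The union of the orbits of a list of pairs. -/
def orbits (L : List (ℕ × ℕ)) : ℕ := orList (fun q ↦ orbit q.1 q.2) L

variable {n : ℕ} {a b c d s : alternatingGroup (Fin 5)}

lemma conj_code : conj (code s) (code a) = code (MulAut.conj s a) := by
  rw [conj, mul_code, inv_code, mul_code, MulAut.conj_apply]

lemma Excluded.of_hasPair_orbit (h : Excluded n a b)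
    (hcd : HasPair (orbit (code a) (code b)) c d) : Excluded n c d := by
  rw [HasPair, orbit, testBit_orTo] at hcd
  obtain ⟨m, hm, hcd⟩ := hcd
  obtain ⟨s, rfl⟩ := exists_code_eq m hm
  rw [testBit_orList] at hcd
  obtain ⟨q, hq, hcd⟩ := hcd
  simp only [swapCode_code, inv_code, mem_cons, not_mem_nil, or_false] at hq
  rcases hq with rfl | rfl | rfl | rfl <;> simp only [conj_code] at hcd <;>
    obtain ⟨rfl, rfl⟩ := hasPair_pairBit.1 hcd
  · exact h.map _
  · exact h.inv.map _
  · exact (h.map swapAut).map _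
  · exact (h.map swapAut).inv.map _

lemma Excluded.of_hasPair_orbits {L : List (ℕ × ℕ)}
    (hL : ∀ a b, (code a, code b) ∈ L → Excluded n a b) (hlt : ∀ q ∈ L, q.1 < 60 ∧ q.2 < 60)
    (hcd : HasPair (orbits L) c d) : Excluded n c d := by
  rw [HasPair, orbits, testBit_orList] at hcd
  obtain ⟨⟨k, l⟩, hq, hcd⟩ := hcd
  obtain ⟨a, rfl⟩ := exists_code_eq k (hlt _ hq).1
  obtain ⟨b, rfl⟩ := exists_code_eq l (hlt _ hq).2
  exact (hL a b hq).of_hasPair_orbit hcd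

end Orbits

section Representatives

/-- Representatives of the orbits of the pairs of elements that do not commute, in the order in
which they are excluded. -/
def reps : List (ℕ × ℕ) :=
  [(12, 17), (1, 21), (1, 15), (1, 13), (1, 23), (1, 4), (1, 20), (4, 12), (1, 14), (4, 25),
    (4, 24), (12, 14), (1, 12), (4, 14), (12, 16), (12, 29), (4, 9), (4, 13), (4, 5)]

/-- Whether `checkPair` succeeds for the representative `k`, given the orbits of the previous
ones. -/
def checkRep (k : ℕ) : Bool :=
  checkPair (orbits (reps.take k)) (reps.getD k (0, 0)).1 (reps.getD k (0, 0)).2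

/-- Whether all pairs of elements commute or belong to the orbits of the representatives. -/
def checkOrbits : Bool :=
  force (orbits reps) fun E ↦ allBits (fun a ↦ allBits (fun b ↦
    Nat.beq (mul a b) (mul b a) || bit E (pairIndex a b)) allCodes) allCodes

set_option maxHeartbeats 0 in
-- Each of the searches takes the kernel up to a minute.
lemma checkRep_eq_true : ∀ k < 19, checkRep k = true := by
  intro k hk
  interval_cases k <;> decide +kernel

lemma checkOrbits_eq_true : checkOrbits = true := by decide +kernel

lemma reps_lt : ∀ q ∈ reps, q.1 < 60 ∧ q.2 < 60 := by decide

lemma excluded_of_getElem?_reps (k : ℕ) : ∀ a b, reps[k]? = some (code a, code b) →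
    Excluded 8 a b := by
  induction k using Nat.strong_induction_on with
  | _ k ih =>
    intro a b hab
    obtain ⟨hk, -⟩ := List.getElem?_eq_some_iff.1 hab
    have hcheck := checkRep_eq_true k hk
    rw [checkRep, getD_eq_getElem?_getD, hab] at hcheck
    refine .of_checkPair (fun c d hcd ↦ .of_hasPair_orbits (fun c d hmem ↦ ?_)
      (fun q hq ↦ reps_lt q (mem_of_mem_take hq)) hcd) hcheck
    obtain ⟨j, hj, hjk⟩ := mem_take_iff_getElem.1 hmem
    exact ih j (by omega) c d (List.getElem?_eq_some_iff.2 ⟨by omega, hjk⟩)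

lemma commute_or_hasPair_orbits (a b : alternatingGroup (Fin 5)) :
    Commute a b ∨ HasPair (orbits reps) a b := by
  have h := checkOrbits_eq_true
  rw [checkOrbits, force_eq] at h
  have ha := of_allBits h (code_lt a) testBit_allCodes
  have hab := of_allBits ha (code_lt b) testBit_allCodes
  rw [mul_code, mul_code, bit_eq, Bool.or_eq_true] at hab
  exact hab.imp_left fun h ↦ code_injective (Nat.eq_of_beq_eq_true h)

lemma excluded_eight (a b : alternatingGroup (Fin 5)) : Excluded 8 a b := by
  rcases commute_or_hasPair_orbits a b with h | h
  · exact .of_commute h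
  · refine .of_hasPair_orbits (fun c d hcd ↦ ?_) reps_lt h
    obtain ⟨k, hk⟩ := mem_iff_getElem?.1 hcd
    exact excluded_of_getElem?_reps k c d hk

end Representatives

end Rewriting

/-- `A₅` satisfies the rewriting property `Pₙ` for every `n ≥ 8`. -/
theorem A5_rewritable_of_eight_le : ∀ n : ℕ, 8 ≤ n →
    RewProp (alternatingGroup (Fin 5)) n := by
  intro n hn
  have not_rigid_eight (x : List (alternatingGroup (Fin 5))) (hx : x.length = 8) :
      ¬ Rewriting.Rigid x :=
    Rewriting.not_rigid_of_forall_excluded Rewriting.excluded_eight x hx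
  exact Rewriting.rewProp_of_not_rigid hn not_rigid_eight
end
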